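/- Fix integers k ≥ 1 and m ≥ 0. As ρ → 1⁻, writing X = 1/log(1/ρ), one has Φ_{(m)}(ρ) = ( ζ(1 + 1/k) · Γ(m + 1/k) · X^{m + 1/k} / log X ) · ( 1 + O(1/log X) ). -/

import Mathlib

/-!
With `X = 1/log(1/ρ)` one has `ρ = e^{-1/X}`, and `Φ_{(m)}(ρ) = X^m ∑_j (1/j) ∑_p f(p/Y_j)` for the
weight `f(u) = u^{km} e^{-u^k}` and `Y_j = (X/j)^{1/k}` (`inner_sum_eq`). So everything rests on a
prime number theorem for the smooth weight `f` with relative error `O(1/log Y)`.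

Mellin inversion on the line `Re s = σ > 1` writes `∑ Λ(n) f(n/Y) - ∫₁^∞ f(x/Y) dx` as the integral
of `Γ(m + s/k) Y^s` against `-ζ'/ζ(s) - 1/(s-1)` (`explicit_formula`). The last function is minus the
logarithmic derivative of the entire function `(s-1) ζ(s)`. The `3-4-1` inequality bounds
`(s-1) ζ(s)` below by a negative power of `1 + |Im s|`, uniformly for `1 < Re s ≤ 2`
(`exists_norm_zetaOne_ge`), so its logarithmic derivative and the derivative of that grow at most
polynomially there (`exists_norm_regLogDeriv_le`). As `Γ` decays faster than any power on vertical
lines, one integration by parts is allowed and gains a factor `1/log Y`; with `σ = 1 + 1/log Y`, for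
which `Y^σ = e Y`, this gives the error `O(Y/log Y)` (`exists_vonMangoldt_ker_sub_le`).

Chebyshev bounds and dyadic summation remove the prime powers and replace the weight `log p` by
`log Y`, so `∑_p f(p/Y) = Γ(m+1/k)/k · Y/log Y + O(Y/log² Y)` (`exists_sum_pr_ker_sub_le`). At
`Y = Y_j` the main term is `Γ(m+1/k) (X/j)^{1/k} / log(X/j)`, and replacing `log(X/j)` by `log X`
costs a relative error `O((1 + log j)²/log X)`, uniformly in `j` (`exists_summand_sub_le`). Both
`∑ j^{-1-1/k} = ζ(1+1/k)` and `∑ j^{-1-1/k} (1 + log j)²` converge, which gives the theorem.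
-/

open Filter

/-- `Φ_{(m)}(ρ) = (ρ d/dρ)^m Φ(ρ) = ∑_{j≥1} ∑_p j^{m-1} p^{km} ρ^{j p^k}`. -/
noncomputable def Phim (k m : ℕ) (ρ : ℝ) : ℝ :=
  ∑' (j : ℕ+) (p : Nat.Primes),
    (j : ℝ) ^ ((m : ℤ) - 1) * ((p : ℕ) : ℝ) ^ (k * m) * ρ ^ ((j : ℕ) * (p : ℕ) ^ k)

noncomputable def zetaR (s : ℝ) : ℝ := (riemannZeta (s : ℂ)).re

namespace PhiAsymp
open Complex MeasureTheory Set Topology Asymptotics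
open ArithmeticFunction (vonMangoldt)

/-! ### The entire function `(s-1) ζ(s)` -/

/-- The entire function `(s - 1) ζ(s)`, with the value `1` at the removed pole. -/
noncomputable def zetaOne : ℂ → ℂ := Function.update (fun s ↦ (s - 1) * riemannZeta s) 1 1

lemma zetaOne_of_ne {s : ℂ} (hs : s ≠ 1) : zetaOne s = (s - 1) * riemannZeta s :=
  Function.update_of_ne hs ..

lemma zetaOne_one : zetaOne 1 = 1 := Function.update_self ..

lemma differentiable_zetaOne : Differentiable ℂ zetaOne := by
  rw [← differentiableOn_univ,
    ← differentiableOn_compl_singleton_and_continuousAt_iff (c := 1) Filter.univ_mem]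
  refine ⟨DifferentiableOn.congr (f := fun s ↦ (s - 1) * riemannZeta s) (fun s hs ↦ ?_)
    fun s hs ↦ zetaOne_of_ne (by simpa using hs), ?_⟩
  · exact ((differentiableAt_id.sub_const 1).mul
      (differentiableAt_riemannZeta (by simpa using hs))).differentiableWithinAt
  · rw [zetaOne, continuousAt_update_same]
    exact riemannZeta_residue_one

lemma zetaOne_ne_zero {s : ℂ} (hs : 1 ≤ s.re) : zetaOne s ≠ 0 := by
  rcases eq_or_ne s 1 with rfl | h
  · simp [zetaOne_one]
  · rw [zetaOne_of_ne h]
    exact mul_ne_zero (sub_ne_zero.mpr h) (riemannZeta_ne_zero_of_one_le_re hs)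

/-- The fractional part on `(1, ∞)`, extended by zero. -/
noncomputable def fracFun : ℝ → ℂ := indicator (Ioi 1) (fun x ↦ ((Int.fract x : ℝ) : ℂ))

lemma measurable_fracFun : Measurable fracFun :=
  (measurable_ofReal.comp measurable_fract).indicator measurableSet_Ioi

lemma norm_fracFun_le (x : ℝ) : ‖fracFun x‖ ≤ 1 := by
  unfold fracFun
  by_cases h : x ∈ Ioi (1 : ℝ)
  · rw [indicator_of_mem h, norm_real, Real.norm_eq_abs, abs_of_nonneg (Int.fract_nonneg x)]
    exact (Int.fract_lt_one x).le
  · simp [indicator_of_notMem h]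

lemma mellin_fracFun (s : ℂ) :
    mellin fracFun s = ∫ t in Ioi (1 : ℝ), (t : ℂ) ^ (s - 1) * ((Int.fract t : ℝ) : ℂ) := by
  have h : ∀ t : ℝ, (t : ℂ) ^ (s - 1) • fracFun t =
      indicator (Ioi 1) (fun t : ℝ ↦ (t : ℂ) ^ (s - 1) * ((Int.fract t : ℝ) : ℂ)) t := fun t ↦ by
    unfold fracFun
    by_cases h : t ∈ Ioi (1 : ℝ)
    · simp only [indicator_of_mem h, smul_eq_mul]
    · simp [indicator_of_notMem h]
  simp_rw [mellin, h]
  rw [setIntegral_indicator measurableSet_Ioi, Ioi_inter_Ioi]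
  simp

lemma differentiableAt_mellin_fracFun {s : ℂ} (hs : s.re < 0) :
    DifferentiableAt ℂ (mellin fracFun) s := by
  refine mellin_differentiableAt_of_isBigO_rpow (a := 0) (b := s.re - 1) ?_ ?_ hs ?_ (by linarith)
  · refine LocallyIntegrable.locallyIntegrableOn ?_ _
    exact (locallyIntegrable_const (1 : ℝ)).mono measurable_fracFun.aestronglyMeasurable
      (ae_of_all _ fun x ↦ by simpa using norm_fracFun_le x)
  · refine IsBigO.of_bound 1 (Eventually.of_forall fun x ↦ ?_)
    simpa using norm_fracFun_le x
  · refine IsBigO.of_bound 1 ?_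
    filter_upwards [Ioo_mem_nhdsGT (zero_lt_one (α := ℝ))] with x hx
    rw [fracFun, indicator_of_notMem (by simpa using hx.2.le)]
    simp

lemma norm_mellin_fracFun_le {s : ℂ} (hs : s.re < 0) : ‖mellin fracFun s‖ ≤ -1 / s.re := by
  rw [mellin_fracFun]
  calc _ ≤ ∫ t in Ioi (1 : ℝ), t ^ (s.re - 1) := by
        refine norm_integral_le_of_norm_le (integrableOn_Ioi_rpow_of_lt (by linarith) one_pos) ?_
        filter_upwards [ae_restrict_mem measurableSet_Ioi] with t ht
        have ht0 : 0 < t := lt_trans one_pos ht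
        rw [norm_mul, norm_cpow_eq_rpow_re_of_pos ht0, norm_real, Real.norm_eq_abs,
          abs_of_nonneg (Int.fract_nonneg t)]
        simpa using mul_le_of_le_one_right (by positivity) (Int.fract_lt_one t).le
    _ = _ := by
        rw [integral_Ioi_rpow_of_lt (by linarith) one_pos]
        simp

lemma zetaOne_eq_of_one_lt {s : ℂ} (hs : 1 < s.re) :
    zetaOne s = s - s * (s - 1) * mellin fracFun (-s) := by
  have hs1 : s ≠ 1 := by rintro rfl; simp at hs
  have key := LSeries_eq_mul_integral (1 : ℕ → ℂ) zero_le_one hs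
    (LSeriesSummable_one_iff.mpr hs) (by
      refine IsBigO.of_bound 1 (Eventually.of_forall fun n ↦ ?_)
      simp)
  rw [LSeries_one_eq_riemannZeta hs] at key
  have hI : ∫ t in Ioi (1 : ℝ), (∑ k ∈ Finset.Icc 1 ⌊t⌋₊, (1 : ℕ → ℂ) k) * (t : ℂ) ^ (-(s + 1)) =
      (∫ t in Ioi (1 : ℝ), (t : ℂ) ^ (-s)) - mellin fracFun (-s) := by
    rw [mellin_fracFun, ← integral_sub (integrableOn_Ioi_cpow_of_lt (by simpa using hs) one_pos)]
    · refine setIntegral_congr_fun measurableSet_Ioi fun t ht ↦ ?_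
      have ht0 : 0 < t := lt_trans one_pos ht
      have h1 : ((Int.fract t : ℝ) : ℂ) = t - (⌊t⌋₊ : ℂ) := by
        have := Int.self_sub_floor t
        rw [← natCast_floor_eq_intCast_floor ht0.le] at this
        rw [← this]; push_cast; rfl
      have h2 : (t : ℂ) ^ (-s) = t * (t : ℂ) ^ (-(s + 1)) := by
        rw [show -s = 1 + -(s + 1) by ring, cpow_add _ _ (by exact_mod_cast ht0.ne'), cpow_one]
      simp only [Pi.one_apply, Finset.sum_const, Nat.card_Icc, h1]
      rw [h2, show -s - 1 = -(s + 1) by ring]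
      simp
      ring
    · refine Integrable.mono' (integrableOn_Ioi_rpow_of_lt (a := -s.re - 1) (by linarith) one_pos)
        ?_ ?_
      · refine (Measurable.mul ?_ (measurable_ofReal.comp measurable_fract)).aestronglyMeasurable
        fun_prop
      · filter_upwards [ae_restrict_mem measurableSet_Ioi] with t ht
        have ht0 : 0 < t := lt_trans one_pos ht
        rw [norm_mul, norm_cpow_eq_rpow_re_of_pos ht0, norm_real, Real.norm_eq_abs,
          abs_of_nonneg (Int.fract_nonneg t)]
        simpa using mul_le_of_le_one_right (by positivity) (Int.fract_lt_one t).le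
  rw [zetaOne_of_ne hs1, key, hI, integral_Ioi_cpow_of_lt (by simpa using hs) one_pos]
  have : s - 1 ≠ 0 := sub_ne_zero.mpr hs1
  have h' : -s + 1 ≠ 0 := by rw [← neg_ne_zero]; simpa [sub_eq_add_neg, add_comm] using this
  simp only [ofReal_one, one_cpow]
  field_simp
  ring

/-- Analytic continuation of the Abel-summation formula for `ζ` to the half plane `Re s > 0`. -/
lemma zetaOne_eq {s : ℂ} (hs : 0 < s.re) :
    zetaOne s = s - s * (s - 1) * mellin fracFun (-s) := by
  have hU : IsOpen {z : ℂ | 0 < z.re} := isOpen_lt continuous_const continuous_re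
  have hconv : Convex ℝ {z : ℂ | 0 < z.re} := convex_halfSpace_re_gt 0
  have h1 : AnalyticOnNhd ℂ zetaOne {z : ℂ | 0 < z.re} :=
    differentiable_zetaOne.differentiableOn.analyticOnNhd hU
  have h2 : AnalyticOnNhd ℂ (fun s ↦ s - s * (s - 1) * mellin fracFun (-s)) {z : ℂ | 0 < z.re} := by
    refine DifferentiableOn.analyticOnNhd (fun z hz ↦ ?_) hU
    refine DifferentiableAt.differentiableWithinAt ?_
    have : DifferentiableAt ℂ (fun s ↦ mellin fracFun (-s)) z :=
      DifferentiableAt.comp (g := mellin fracFun) z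
        (differentiableAt_mellin_fracFun (by simpa using hz)) differentiableAt_id.neg
    fun_prop
  refine h1.eqOn_of_preconnected_of_eventuallyEq h2 hconv.isPreconnected
    (z₀ := 2) (by simp) ?_ hs
  filter_upwards [(isOpen_lt continuous_const continuous_re : IsOpen {z : ℂ | 1 < z.re}).mem_nhds
    (show (1 : ℝ) < (2 : ℂ).re by simp)] with z hz using zetaOne_eq_of_one_lt hz

/-- Quadratic growth on vertical lines, read off from `zetaOne_eq`; the strip is wide enough for
Cauchy estimates on `1 ≤ Re s ≤ 2`. -/
lemma norm_zetaOne_le {s : ℂ} (h1 : 1 / 2 ≤ s.re) (h2 : s.re ≤ 3) :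
    ‖zetaOne s‖ ≤ 21 * (1 + |s.im|) ^ 2 := by
  rw [zetaOne_eq (by linarith)]
  have hn := norm_mellin_fracFun_le (s := -s) (by simp; linarith)
  have hn2 : ‖mellin fracFun (-s)‖ ≤ 2 := by
    refine hn.trans ?_
    rw [neg_re, neg_div_neg_eq, div_le_iff₀ (by linarith)]
    linarith
  have hi := abs_nonneg s.im
  have hs : ‖s‖ ≤ 3 * (1 + |s.im|) := by
    refine (norm_le_abs_re_add_abs_im s).trans ?_
    rw [abs_of_nonneg (by linarith)]; linarith
  have hs' : ‖s - 1‖ ≤ 3 * (1 + |s.im|) := by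
    refine (norm_le_abs_re_add_abs_im _).trans ?_
    have : |(s - 1).re| ≤ 2 := by rw [abs_le]; simp; constructor <;> linarith
    simp at this ⊢; linarith
  calc _ ≤ ‖s‖ + ‖s‖ * ‖s - 1‖ * ‖mellin fracFun (-s)‖ := by
        refine (norm_sub_le _ _).trans ?_
        simp
    _ ≤ 3 * (1 + |s.im|) + 3 * (1 + |s.im|) * (3 * (1 + |s.im|)) * 2 := by gcongr
    _ ≤ _ := by nlinarith

/-! ### Growth of `ζ'/ζ` up to the line `Re s = 1` -/

/-- Cauchy's estimate, in the form in which polynomial growth in a vertical strip passes to the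
derivative in a narrower strip. -/
lemma norm_deriv_le_of_strip {f : ℂ → ℂ} (hf : Differentiable ℂ f) {a b C : ℝ} (hC : 0 ≤ C)
    (h : ∀ s : ℂ, a ≤ s.re → s.re ≤ b → ‖f s‖ ≤ C * (1 + |s.im|) ^ 2)
    {s : ℂ} (h1 : a + 1 / 4 ≤ s.re) (h2 : s.re ≤ b - 1 / 4) :
    ‖deriv f s‖ ≤ 16 * C * (1 + |s.im|) ^ 2 := by
  have := norm_deriv_le_of_forall_mem_sphere_norm_le (c := s) (R := 1 / 4) (f := f)
    (C := C * (2 * (1 + |s.im|)) ^ 2) (by norm_num) hf.diffContOnCl (fun z hz ↦ by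
      have hz' : ‖z - s‖ = 1 / 4 := by simpa [dist_eq_norm] using hz
      have hre := (abs_re_le_norm (z - s)).trans hz'.le
      have him := (abs_im_le_norm (z - s)).trans hz'.le
      rw [sub_re, abs_le] at hre
      rw [sub_im] at him
      have him2 : |z.im| ≤ |s.im| + 1 / 4 := by
        have := abs_sub_abs_le_abs_sub z.im s.im
        linarith
      refine (h z (by linarith) (by linarith)).trans ?_
      have := abs_nonneg s.im
      have := abs_nonneg z.im
      gcongr
      linarith)
  refine this.trans (le_of_eq ?_)
  ring

lemma exists_norm_deriv_zetaOne_le : ∃ C : ℝ, 0 < C ∧ ∀ s : ℂ, 1 ≤ s.re → s.re ≤ 2 →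
    ‖zetaOne s‖ ≤ C * (1 + |s.im|) ^ 2 ∧ ‖deriv zetaOne s‖ ≤ C * (1 + |s.im|) ^ 2 ∧
    ‖deriv (deriv zetaOne) s‖ ≤ C * (1 + |s.im|) ^ 2 := by
  have hd : Differentiable ℂ (deriv zetaOne) :=
    (differentiable_zetaOne.contDiff (n := 2)).differentiable_deriv_two
  have h1 : ∀ s : ℂ, 3 / 4 ≤ s.re → s.re ≤ 11 / 4 →
      ‖deriv zetaOne s‖ ≤ 16 * 21 * (1 + |s.im|) ^ 2 := fun s hs hs' ↦
    norm_deriv_le_of_strip differentiable_zetaOne (a := 1 / 2) (b := 3) (by norm_num)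
      (fun s h h' ↦ norm_zetaOne_le h h') (by linarith) (by linarith)
  have h2 : ∀ s : ℂ, 1 ≤ s.re → s.re ≤ 2 →
      ‖deriv (deriv zetaOne) s‖ ≤ 16 * (16 * 21) * (1 + |s.im|) ^ 2 := fun s hs hs' ↦
    norm_deriv_le_of_strip hd (by norm_num) h1 (by linarith) (by linarith)
  refine ⟨16 * (16 * 21), by norm_num, fun s hs hs' ↦ ⟨?_, ?_, h2 s hs hs'⟩⟩
  · refine (norm_zetaOne_le (by linarith) (by linarith)).trans ?_
    gcongr; norm_num
  · refine (h1 s (by linarith) (by linarith)).trans ?_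
    gcongr; norm_num

lemma zeta_three_four_one {x : ℝ} (hx : 0 < x) (y : ℝ) :
    1 ≤ ‖riemannZeta (1 + x)‖ ^ 3 * ‖riemannZeta (1 + x + I * y)‖ ^ 4 *
      ‖riemannZeta (1 + x + 2 * I * y)‖ := by
  have := DirichletCharacter.norm_LFunction_product_ge_one (1 : DirichletCharacter ℂ 1) hx y
  rw [one_pow, DirichletCharacter.LFunction_modOne_eq, DirichletCharacter.LFunctionTrivChar,
    DirichletCharacter.LFunction_modOne_eq] at this
  simpa [norm_mul, norm_pow] using this

/-- The `3-4-1` inequality for `(s-1) ζ(s)`: a lower bound away from the real axis that degenerates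
as `Re s → 1`. -/
lemma exists_zetaOne_pow_four_ge : ∃ c : ℝ, 0 < c ∧ ∀ x y : ℝ, 0 < x → x ≤ 1 → 1 ≤ |y| →
    c ^ 4 * x ^ 3 / (1 + |y|) ^ 4 ≤ ‖zetaOne (1 + x + I * y)‖ ^ 4 := by
  refine ⟨1 / 84, by norm_num, fun x y hx hx1 hy ↦ ?_⟩
  have h := zeta_three_four_one hx y
  have e1 : ‖riemannZeta (1 + x)‖ ≤ 21 / x := by
    have hne : (1 + x : ℂ) ≠ 1 := by simp [hx.ne']
    have := norm_zetaOne_le (s := 1 + x) (by simp; linarith) (by simp; linarith)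
    rw [zetaOne_of_ne hne, norm_mul] at this
    rw [le_div_iff₀ hx]
    simp [abs_of_pos hx] at this
    linarith
  have e2 : ‖riemannZeta (1 + x + I * y)‖ ≤ ‖zetaOne (1 + x + I * y)‖ := by
    have hn : 1 ≤ ‖(1 + x + I * y : ℂ) - 1‖ := by
      refine hy.trans ?_
      have := abs_im_le_norm ((1 + x + I * y : ℂ) - 1)
      simpa using this
    have hne : (1 + x + I * y : ℂ) ≠ 1 := by
      intro h; rw [h] at hn; norm_num at hn
    rw [zetaOne_of_ne hne, norm_mul]
    exact le_mul_of_one_le_left (norm_nonneg _) hn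
  have e3 : ‖riemannZeta (1 + x + 2 * I * y)‖ ≤ 84 * (1 + |y|) ^ 2 := by
    have hn : 1 ≤ ‖(1 + x + 2 * I * y : ℂ) - 1‖ := by
      have := abs_im_le_norm ((1 + x + 2 * I * y : ℂ) - 1)
      simp at this
      linarith
    have hne : (1 + x + 2 * I * y : ℂ) ≠ 1 := by
      intro h; rw [h] at hn; norm_num at hn
    have := norm_zetaOne_le (s := 1 + x + 2 * I * y) (by simp; linarith) (by simp; linarith)
    rw [zetaOne_of_ne hne, norm_mul] at this
    refine (le_mul_of_one_le_left (norm_nonneg _) hn).trans (this.trans ?_)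
    simp
    nlinarith [abs_nonneg y]
  set Z := ‖zetaOne (1 + x + I * y)‖
  have hyp : 0 ≤ |y| := abs_nonneg y
  have h' : 1 ≤ (21 / x) ^ 3 * Z ^ 4 * (84 * (1 + |y|) ^ 2) := h.trans (by gcongr)
  have h3 : x ^ 3 ≤ 21 ^ 3 * 84 * (Z ^ 4 * (1 + |y|) ^ 2) := by
    have := mul_le_mul_of_nonneg_left h' (pow_pos hx 3).le
    calc x ^ 3 = x ^ 3 * 1 := by ring
      _ ≤ _ := this
      _ = _ := by field_simp
  have hZ : 0 ≤ Z ^ 4 := by positivity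
  have h4 : Z ^ 4 * (1 + |y|) ^ 2 ≤ Z ^ 4 * (1 + |y|) ^ 4 := by gcongr <;> [linarith; norm_num]
  rw [div_le_iff₀ (by positivity)]
  linarith [pow_pos hx 3]

/-- Quantitative non-vanishing of `(s-1) ζ(s)` up to the line `Re s = 1`. -/
lemma exists_norm_zetaOne_ge : ∃ c : ℝ, 0 < c ∧ ∀ s : ℂ, 1 < s.re → s.re ≤ 2 →
    c / (1 + |s.im|) ^ 10 ≤ ‖zetaOne s‖ := by
  obtain ⟨c, hc, h341⟩ := exists_zetaOne_pow_four_ge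
  obtain ⟨C, hC, hbd⟩ := exists_norm_deriv_zetaOne_le
  -- near the real axis: compactness
  obtain ⟨c₂, hc₂, hnear⟩ : ∃ c₂ : ℝ, 0 < c₂ ∧ ∀ s : ℂ, 1 < s.re → s.re ≤ 2 → |s.im| ≤ 1 →
      c₂ ≤ ‖zetaOne s‖ := by
    have hK : IsCompact (Icc (1 : ℝ) 2 ×ℂ Icc (-1 : ℝ) 1) := isCompact_Icc.reProdIm isCompact_Icc
    obtain ⟨z, hz, hmin⟩ := hK.exists_isMinOn (f := fun s ↦ ‖zetaOne s‖)
      ⟨1, by simp [mem_reProdIm]⟩ differentiable_zetaOne.continuous.norm.continuousOn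
    refine ⟨‖zetaOne z‖, norm_pos_iff.mpr (zetaOne_ne_zero hz.1.1), fun s h1 h2 h3 ↦ hmin ?_⟩
    exact ⟨⟨h1.le, h2⟩, abs_le.mp h3⟩
  -- `ε` balances the `3-4-1` bound at distance `(ε/τ³)⁴` from the line against the variation of
  -- `zetaOne` over that distance.
  set ε := min 1 (c / (2 * C)) with hε
  have hε0 : 0 < ε := lt_min one_pos (by positivity)
  have hε1 : ε ≤ 1 := min_le_left _ _
  have hε2 : C * ε ≤ c / 2 := by
    calc C * ε ≤ C * (c / (2 * C)) := by gcongr; exact min_le_right _ _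
      _ = c / 2 := by field_simp
  refine ⟨min c₂ (c / 2 * ε ^ 3), lt_min hc₂ (by positivity), fun s h1 h2 ↦ ?_⟩
  set τ := 1 + |s.im| with hτ
  have hτ1 : 1 ≤ τ := by simp [hτ]
  rcases le_total |s.im| 1 with him | him
  · refine le_trans ?_ (hnear s h1 h2 him)
    exact (div_le_self (lt_min hc₂ (by positivity)).le (one_le_pow₀ hτ1)).trans (min_le_left _ _)
  have hsx : ∀ w : ℂ, w = 1 + ((w.re - 1 : ℝ) : ℂ) + I * (w.im : ℂ) := fun w ↦ by
    apply Complex.ext <;> simp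
  set u := ε / τ ^ 3 with hu
  have hu0 : 0 < u := by positivity
  have hu1 : u ≤ 1 := (div_le_self hε0.le (one_le_pow₀ hτ1)).trans hε1
  -- the bound at distance at least `u⁴` from the line
  have hfar : ∀ w : ℂ, w.im = s.im → 1 + u ^ 4 ≤ w.re → w.re ≤ 2 → c * u ^ 3 / τ ≤ ‖zetaOne w‖ := by
    intro w hw hw1 hw2
    have := h341 (w.re - 1) w.im (by nlinarith [pow_pos hu0 4]) (by linarith) (by rwa [hw])
    rw [← hsx w, hw, ← hτ] at this
    refine le_of_pow_le_pow_left₀ (n := 4) (by norm_num) (norm_nonneg _) (le_trans ?_ this)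
    calc (c * u ^ 3 / τ) ^ 4 = c ^ 4 * (u ^ 4) ^ 3 / τ ^ 4 := by ring
      _ ≤ c ^ 4 * (w.re - 1) ^ 3 / τ ^ 4 := by gcongr; linarith
  have hgoal : min c₂ (c / 2 * ε ^ 3) / τ ^ 10 ≤ c / 2 * u ^ 3 / τ := by
    calc _ ≤ (c / 2 * ε ^ 3) / τ ^ 10 := by gcongr; exact min_le_right _ _
      _ = _ := by rw [hu]; field_simp
  refine hgoal.trans ?_
  rcases le_total (1 + u ^ 4) s.re with hs | hs
  · refine le_trans ?_ (hfar s rfl hs h2)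
    gcongr; linarith
  · set w : ℂ := 1 + (u ^ 4 : ℝ) + I * s.im with hw
    have hwre : w.re = 1 + u ^ 4 := by simp [hw, -ofReal_pow]
    have hwim : w.im = s.im := by simp [hw, -ofReal_pow]
    have hu4 : u ^ 4 ≤ 1 := pow_le_one₀ hu0.le hu1
    have hb := hfar w hwim hwre.ge (by linarith)
    have hws : ‖w - s‖ ≤ u ^ 4 := by
      have : w - s = ((w.re - s.re : ℝ) : ℂ) := by
        apply Complex.ext <;> simp [hwim]
      rw [this, norm_real, Real.norm_eq_abs, abs_of_nonneg (by linarith), hwre]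
      linarith
    have hmv : ‖zetaOne w - zetaOne s‖ ≤ C * τ ^ 2 * ‖w - s‖ := by
      refine (convex_segment s w).norm_image_sub_le_of_norm_deriv_le
        (fun z _ ↦ differentiable_zetaOne z) (fun z hz ↦ ?_) (left_mem_segment ℝ s w)
        (right_mem_segment ℝ s w)
      obtain ⟨a, b, ha, hb, hab, rfl⟩ := hz
      have hzi : (a • s + b • w).im = s.im := by
        simp [hwim, ← add_mul, hab]
      have hzr : (a • s + b • w).re = a * s.re + b * w.re := by simp
      have := (hbd (a • s + b • w) (by rw [hzr]; nlinarith [pow_pos hu0 4])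
        (by rw [hzr]; nlinarith)).2.1
      rwa [hzi] at this
    have hvar : C * τ ^ 2 * ‖w - s‖ ≤ c / 2 * u ^ 3 / τ := by
      calc _ ≤ C * τ ^ 2 * u ^ 4 := by gcongr
        _ = C * ε * u ^ 3 / τ := by rw [hu]; field_simp
        _ ≤ _ := by gcongr
    have htri : ‖zetaOne w‖ - ‖zetaOne s‖ ≤ ‖zetaOne w - zetaOne s‖ := norm_sub_norm_le _ _
    have : c * u ^ 3 / τ = c / 2 * u ^ 3 / τ + c / 2 * u ^ 3 / τ := by ring
    linarith

/-- `-ζ'/ζ(s) - 1/(s-1)`, continued to a neighbourhood of `Re s ≥ 1`. -/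
noncomputable def regLogDeriv (s : ℂ) : ℂ := -(deriv zetaOne s / zetaOne s)

lemma hasDerivAt_regLogDeriv {s : ℂ} (hs : 1 ≤ s.re) :
    HasDerivAt regLogDeriv (-((deriv (deriv zetaOne) s * zetaOne s -
      deriv zetaOne s * deriv zetaOne s) / zetaOne s ^ 2)) s := by
  have hd : Differentiable ℂ (deriv zetaOne) :=
    (differentiable_zetaOne.contDiff (n := 2)).differentiable_deriv_two
  exact ((hd s).hasDerivAt.div (differentiable_zetaOne s).hasDerivAt (zetaOne_ne_zero hs)).neg

lemma continuousOn_deriv_regLogDeriv : ContinuousOn (deriv regLogDeriv) {s | 1 < s.re} := by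
  have hU : IsOpen {z : ℂ | 1 < z.re} := isOpen_lt continuous_const continuous_re
  have h : DifferentiableOn ℂ regLogDeriv {s | 1 < s.re} := fun s hs ↦
    (hasDerivAt_regLogDeriv (le_of_lt hs)).differentiableAt.differentiableWithinAt
  exact (h.deriv hU).continuousOn

/-- Polynomial growth of the regularised `-ζ'/ζ` and of its derivative, uniformly up to the line
`Re s = 1`. This is all that the prime number theorem below uses about `ζ`. -/
lemma exists_norm_regLogDeriv_le : ∃ C : ℝ, 0 < C ∧ ∀ s : ℂ, 1 < s.re → s.re ≤ 2 →
    ‖regLogDeriv s‖ ≤ C * (1 + |s.im|) ^ 24 ∧ ‖deriv regLogDeriv s‖ ≤ C * (1 + |s.im|) ^ 24 := by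
  obtain ⟨c, hc, hlow⟩ := exists_norm_zetaOne_ge
  obtain ⟨C, hC, hbd⟩ := exists_norm_deriv_zetaOne_le
  refine ⟨C / c + 2 * (C / c) ^ 2, by positivity, fun s h1 h2 ↦ ?_⟩
  obtain ⟨b0, b1, b2⟩ := hbd s h1.le h2
  have hl := hlow s h1 h2
  set τ := 1 + |s.im| with hτ
  have hτ1 : 1 ≤ τ := by simp [hτ]
  have hpow : τ ^ 12 ≤ τ ^ 24 := pow_le_pow_right₀ hτ1 (by norm_num)
  have hpos : 0 < c / τ ^ 10 := by positivity
  constructor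
  · rw [regLogDeriv, norm_neg, norm_div]
    calc _ ≤ C * τ ^ 2 / (c / τ ^ 10) := by gcongr
      _ = C / c * τ ^ 12 := by field_simp
      _ ≤ C / c * τ ^ 24 := by gcongr
      _ ≤ _ := by gcongr; simp; positivity
  · rw [(hasDerivAt_regLogDeriv h1.le).deriv, norm_neg, norm_div, norm_pow]
    calc _ ≤ (C * τ ^ 2 * (C * τ ^ 2) + C * τ ^ 2 * (C * τ ^ 2)) / (c / τ ^ 10) ^ 2 := by
          gcongr
          refine (norm_sub_le _ _).trans ?_
          rw [norm_mul, norm_mul]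
          gcongr
      _ = 2 * (C / c) ^ 2 * τ ^ 24 := by field_simp; norm_num
      _ ≤ _ := by gcongr; simp; positivity

/-! ### Decay of `Γ` and Mellin inversion for the weight -/

lemma norm_Gamma_le {s : ℂ} (hs : 0 < s.re) : ‖Gamma s‖ ≤ Real.Gamma s.re := by
  rw [Gamma_eq_integral hs, Real.Gamma_eq_integral hs, GammaIntegral]
  refine norm_integral_le_of_norm_le (Real.GammaIntegral_convergent hs) ?_
  filter_upwards [ae_restrict_mem measurableSet_Ioi] with t ht
  rw [norm_mul, norm_cpow_eq_rpow_re_of_pos ht, norm_real, Real.norm_eq_abs,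
    abs_of_pos (Real.exp_pos _)]
  simp

/-- Rapid decay of `Γ` in vertical strips, from iterating `Γ(s) = Γ(s+1)/s`. -/
lemma exists_norm_Gamma_le (N : ℕ) : ∀ a b : ℝ, 0 < a → ∃ C : ℝ, 0 < C ∧ ∀ s : ℂ,
    a ≤ s.re → s.re ≤ b → ‖Gamma s‖ ≤ C / (1 + |s.im|) ^ N := by
  induction N with
  | zero =>
    intro a b ha
    have hcont : ContinuousOn Real.Gamma (Icc a b) := fun x hx ↦
      (Real.differentiableAt_Gamma fun m h ↦ by
        have := ha.trans_le hx.1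
        have : (0 : ℝ) ≤ m := m.cast_nonneg
        linarith).continuousAt.continuousWithinAt
    obtain ⟨C, hC⟩ := isCompact_Icc.exists_bound_of_continuousOn hcont
    refine ⟨max C 1, by positivity, fun s h1 h2 ↦ ?_⟩
    rw [pow_zero, div_one]
    exact (norm_Gamma_le (ha.trans_le h1)).trans
      ((le_abs_self _).trans ((hC _ ⟨h1, h2⟩).trans (le_max_left _ _)))
  | succ N ih =>
    intro a b ha
    obtain ⟨C, hC, h⟩ := ih (a + 1) (b + 1) (by linarith)
    set d := min a 1 / 2 with hd
    have hd0 : 0 < d := by positivity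
    refine ⟨C / d, by positivity, fun s h1 h2 ↦ ?_⟩
    have hs0 : s ≠ 0 := by rintro rfl; simp at h1; linarith
    have hsn : d * (1 + |s.im|) ≤ ‖s‖ := by
      have e1 : a ≤ ‖s‖ := h1.trans ((le_abs_self _).trans (abs_re_le_norm s))
      have e2 := abs_im_le_norm s
      have e3 : min a 1 ≤ a := min_le_left _ _
      have e4 : min a 1 * |s.im| ≤ 1 * |s.im| := by gcongr; exact min_le_right _ _
      rw [hd]; linarith
    have e := h (s + 1) (by simpa using h1) (by simpa using h2)
    rw [Gamma_add_one s hs0, norm_mul] at e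
    have hi := abs_nonneg s.im
    have hG : ‖Gamma s‖ = ‖s‖ * ‖Gamma s‖ / ‖s‖ := by
      field_simp
    rw [hG]
    calc _ ≤ C / (1 + |(s + 1).im|) ^ N / (d * (1 + |s.im|)) := by gcongr
      _ = _ := by rw [pow_succ]; simp; field_simp

lemma differentiableAt_Gamma_of_re_pos {s : ℂ} (hs : 0 < s.re) : DifferentiableAt ℂ Gamma s :=
  differentiableAt_Gamma s fun m h ↦ by
    have := congrArg re h
    simp at this
    have : (0 : ℝ) ≤ m := m.cast_nonneg
    linarith

/-- Rapid decay of `Γ` together with that of `Γ'`, the latter by Cauchy's estimate on a disc of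
fixed radius. -/
lemma exists_norm_deriv_Gamma_le (N : ℕ) (a b : ℝ) (ha : 0 < a) : ∃ C : ℝ, 0 < C ∧ ∀ s : ℂ,
    a ≤ s.re → s.re ≤ b →
      ‖Gamma s‖ ≤ C / (1 + |s.im|) ^ N ∧ ‖deriv Gamma s‖ ≤ C / (1 + |s.im|) ^ N := by
  set r := min (a / 2) (1 / 2) with hr
  have hr0 : 0 < r := by positivity
  have hra : r ≤ a / 2 := min_le_left _ _
  have hr1 : r ≤ 1 / 2 := min_le_right _ _
  obtain ⟨C, hC, h⟩ := exists_norm_Gamma_le N (a / 2) (b + 1) (by positivity)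
  refine ⟨C + C * 2 ^ N / r, by positivity, fun s h1 h2 ↦ ⟨?_, ?_⟩⟩
  · refine (h s (by linarith) (by linarith)).trans ?_
    gcongr
    simp; positivity
  · have hi := abs_nonneg s.im
    have := norm_deriv_le_of_forall_mem_sphere_norm_le (c := s) (R := r) (f := Gamma)
      (C := C / ((1 + |s.im|) / 2) ^ N) hr0 (DifferentiableOn.diffContOnCl (fun z hz ↦ by
        rw [closure_ball _ hr0.ne', Metric.mem_closedBall, dist_eq_norm] at hz
        have := (abs_re_le_norm (z - s)).trans hz
        rw [sub_re, abs_le] at this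
        exact (differentiableAt_Gamma_of_re_pos (by linarith)).differentiableWithinAt))
      (fun z hz ↦ by
        have hz' : ‖z - s‖ = r := by simpa [dist_eq_norm] using hz
        have hre := (abs_re_le_norm (z - s)).trans hz'.le
        have him := (abs_im_le_norm (z - s)).trans hz'.le
        rw [sub_re, abs_le] at hre
        rw [sub_im] at him
        have him2 : |s.im| ≤ |z.im| + r := by
          have := abs_sub_abs_le_abs_sub s.im z.im
          rw [abs_sub_comm] at this
          linarith
        refine (h z (by linarith) (by linarith)).trans ?_
        gcongr
        linarith)
    refine this.trans ?_
    calc C / ((1 + |s.im|) / 2) ^ N / r = C * 2 ^ N / r / (1 + |s.im|) ^ N := by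
          rw [div_pow]; field_simp
      _ ≤ _ := by gcongr; linarith

/-- The weight `u ↦ u^{km} e^{-u^k}`; after rescaling, `Φ_{(m)}` is a sum of its values at primes. -/
noncomputable def ker (k m : ℕ) (u : ℝ) : ℝ := u ^ (k * m) * Real.exp (-u ^ k)

/-- The point `σ + i k t`. -/
noncomputable def pt (k : ℕ) (σ t : ℝ) : ℂ := σ + k * t * I

/-- The point `m + σ/k + i t` at which `Γ` is evaluated. -/
noncomputable def gpt (k m : ℕ) (σ t : ℝ) : ℂ := ((m + σ / k : ℝ) : ℂ) + t * I

@[simp] lemma pt_re (k : ℕ) (σ t : ℝ) : (pt k σ t).re = σ := by simp [pt]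
@[simp] lemma pt_im (k : ℕ) (σ t : ℝ) : (pt k σ t).im = k * t := by simp [pt]
@[simp] lemma gpt_re (k m : ℕ) (σ t : ℝ) : (gpt k m σ t).re = m + σ / k := by
  simp [gpt, -ofReal_add, -ofReal_div]
@[simp] lemma gpt_im (k m : ℕ) (σ t : ℝ) : (gpt k m σ t).im = t := by
  simp [gpt, -ofReal_add, -ofReal_div]

lemma hasDerivAt_pt (k : ℕ) (σ t : ℝ) : HasDerivAt (pt k σ) (k * I) t := by
  have h : HasDerivAt (fun t : ℝ ↦ (t : ℂ)) 1 t := ofRealCLM.hasDerivAt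
  have := ((h.const_mul (k : ℂ)).mul_const I).const_add (σ : ℂ)
  rwa [mul_one] at this

lemma hasDerivAt_gpt (k m : ℕ) (σ t : ℝ) : HasDerivAt (gpt k m σ) I t := by
  have h : HasDerivAt (fun t : ℝ ↦ (t : ℂ)) 1 t := ofRealCLM.hasDerivAt
  have := (h.mul_const I).const_add ((m + σ / k : ℝ) : ℂ)
  rwa [one_mul] at this

lemma gpt_re_pos {k m : ℕ} (hk : 1 ≤ k) {σ : ℝ} (hσ : 1 < σ) (t : ℝ) : 0 < (gpt k m σ t).re := by
  rw [gpt_re]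
  have : (0 : ℝ) < k := by exact_mod_cast hk
  positivity

lemma continuous_Gamma_gpt {k m : ℕ} (hk : 1 ≤ k) {σ : ℝ} (hσ : 1 < σ) :
    Continuous fun t ↦ Gamma (gpt k m σ t) := by
  refine continuous_iff_continuousAt.mpr fun t ↦ ?_
  exact ContinuousAt.comp (g := Gamma)
    (differentiableAt_Gamma_of_re_pos (gpt_re_pos hk hσ t)).continuousAt
    (hasDerivAt_gpt k m σ t).continuousAt

lemma integrable_one_add_abs_sq : Integrable (fun t : ℝ ↦ 1 / (1 + |t|) ^ 2) := by
  have := integrable_one_add_norm (E := ℝ) (μ := volume) (r := 2) (by simp)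
  refine this.congr (ae_of_all _ fun t ↦ ?_)
  simp only [Real.norm_eq_abs]
  rw [Real.rpow_neg (by positivity), one_div]
  norm_cast

lemma integrable_Gamma_gpt {k m : ℕ} (hk : 1 ≤ k) {σ : ℝ} (hσ : 1 < σ) :
    Integrable fun t ↦ Gamma (gpt k m σ t) := by
  have hpos : 0 < (m + σ / k : ℝ) := by simpa using gpt_re_pos (m := m) hk hσ 0
  obtain ⟨C, hC, h⟩ := exists_norm_Gamma_le 2 (m + σ / k) (m + σ / k) hpos
  refine (integrable_one_add_abs_sq.const_mul C).mono'
    (continuous_Gamma_gpt hk hσ).aestronglyMeasurable (ae_of_all _ fun t ↦ ?_)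
  simpa [div_eq_mul_inv] using h (gpt k m σ t) (by simp) (by simp)

lemma exp_neg_eq_integral {c : ℝ} (hc : 0 < c) {x : ℝ} (hx : 0 < x)
    (hint : Integrable fun t : ℝ ↦ Gamma (c + t * I)) :
    ((Real.exp (-x) : ℝ) : ℂ) =
      (1 / (2 * Real.pi) : ℝ) • ∫ t : ℝ, (x : ℂ) ^ (-(c + t * I)) * Gamma (c + t * I) := by
  have hG : ∀ t : ℝ, mellin (fun x : ℝ ↦ ((Real.exp (-x) : ℝ) : ℂ)) (c + t * I) =
      Gamma (c + t * I) := fun t ↦ by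
    rw [Gamma_eq_integral (by simpa using hc), GammaIntegral_eq_mellin]
  have := mellinInv_mellin_eq c (fun x : ℝ ↦ ((Real.exp (-x) : ℝ) : ℂ)) hx ?_ ?_ ?_
  · rw [← this, mellinInv]
    simp only [hG, smul_eq_mul]
  · have := GammaIntegral_convergent (s := c) (by simpa using hc)
    rw [MellinConvergent]
    refine this.congr_fun (fun t _ ↦ ?_) measurableSet_Ioi
    simp [mul_comm]
  · rw [VerticalIntegrable]
    exact hint.congr (ae_of_all _ fun t ↦ (hG t).symm)
  · fun_prop

lemma cpow_ratio {x Y : ℝ} (hx : 0 < x) (hY : 0 < Y) (s : ℂ) :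
    (Y : ℂ) ^ s / (x : ℂ) ^ s = exp (-(s * (Real.log (x / Y) : ℝ))) := by
  rw [cpow_def_of_ne_zero (by exact_mod_cast hY.ne'), cpow_def_of_ne_zero (by exact_mod_cast hx.ne'),
    ← ofReal_log hx.le, ← ofReal_log hY.le, ← exp_sub, Real.log_div hx.ne' hY.ne']
  congr 1
  push_cast
  ring

/-- Mellin inversion for the rescaled weight on the line `Re s = σ`. -/
lemma ker_eq_integral {k m : ℕ} (hk : 1 ≤ k) {σ : ℝ} (hσ : 1 < σ) {x Y : ℝ} (hx : 0 < x)
    (hY : 0 < Y) :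
    (ker k m (x / Y) : ℂ) = (1 / (2 * Real.pi) : ℝ) •
      ∫ t : ℝ, Gamma (gpt k m σ t) * ((Y : ℂ) ^ pt k σ t / (x : ℂ) ^ pt k σ t) := by
  have hk0 : (k : ℝ) ≠ 0 := by positivity
  have hu : 0 < x / Y := by positivity
  have hpos : 0 < (m + σ / k : ℝ) := by simpa using gpt_re_pos (m := m) hk hσ 0
  have h := exp_neg_eq_integral hpos (pow_pos hu k) (integrable_Gamma_gpt hk hσ)
  rw [ker, ofReal_mul, h, mul_smul_comm, ← integral_const_mul]
  congr 1
  refine integral_congr_ae (ae_of_all _ fun t ↦ ?_)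
  simp only
  rw [cpow_ratio hx hY, cpow_def_of_ne_zero (by exact_mod_cast (pow_pos hu k).ne'),
    ← ofReal_log (pow_pos hu k).le, Real.log_pow, ← Real.exp_log hu, Real.log_exp, gpt,
    mul_comm (Gamma _), ← mul_assoc]
  congr 1
  rw [← Real.exp_nat_mul, ofReal_exp, ← exp_add]
  congr 1
  have hk0' : (k : ℂ) ≠ 0 := by exact_mod_cast hk0
  rw [pt]
  push_cast
  field_simp
  ring

/-! ### The smooth prime number theorem for `Λ` -/

lemma pt_ne_one {k : ℕ} {σ : ℝ} (hσ : 1 < σ) (t : ℝ) : pt k σ t ≠ 1 := fun h ↦ by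
  have := congrArg re h
  simp at this
  linarith

lemma regLogDeriv_eq {s : ℂ} (hs : 1 < s.re) :
    LSeries (fun n ↦ (vonMangoldt n : ℂ)) s - 1 / (s - 1) = regLogDeriv s := by
  have hs1 : s ≠ 1 := by rintro rfl; simp at hs
  have hz := riemannZeta_ne_zero_of_one_le_re hs.le
  have hsub : s - 1 ≠ 0 := sub_ne_zero.mpr hs1
  have hd : deriv zetaOne s = riemannZeta s + (s - 1) * deriv riemannZeta s := by
    have h1 : zetaOne =ᶠ[𝓝 s] fun s ↦ (s - 1) * riemannZeta s := by
      filter_upwards [isOpen_ne.mem_nhds hs1] with z hz using zetaOne_of_ne hz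
    have h2 := ((hasDerivAt_id s).sub_const 1).mul (differentiableAt_riemannZeta hs1).hasDerivAt
    rw [h1.deriv_eq]
    have h3 : deriv (fun s ↦ (s - 1) * riemannZeta s) s =
        1 * riemannZeta s + (id s - 1) * deriv riemannZeta s := h2.deriv
    rw [h3]
    simp
  rw [ArithmeticFunction.LSeries_vonMangoldt_eq_deriv_riemannZeta_div hs, regLogDeriv, hd,
    zetaOne_of_ne hs1]
  field_simp
  ring

lemma norm_cpow_pt {k : ℕ} {σ t x : ℝ} (hx : 0 < x) : ‖(x : ℂ) ^ pt k σ t‖ = x ^ σ := by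
  rw [norm_cpow_eq_rpow_re_of_pos hx, pt_re]

lemma continuous_pt (k : ℕ) (σ : ℝ) : Continuous (pt k σ) := by
  unfold pt; fun_prop

lemma continuous_cpow_pt {k : ℕ} {σ x : ℝ} (hx : 0 < x) :
    Continuous fun t ↦ (x : ℂ) ^ pt k σ t :=
  (continuous_pt k σ).const_cpow (Or.inl (by exact_mod_cast hx.ne.symm))

/-- The part of the explicit formula coming from the Dirichlet series `∑ Λ(n) n^{-s}`. -/
lemma hasSum_vonMangoldt_ker {k m : ℕ} (hk : 1 ≤ k) {σ : ℝ} (hσ : 1 < σ) {Y : ℝ} (hY : 0 < Y) :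
    HasSum (fun n : ℕ ↦ ((vonMangoldt n * ker k m (n / Y) : ℝ) : ℂ))
      ((1 / (2 * Real.pi) : ℝ) • ∫ t : ℝ, Gamma (gpt k m σ t) * (Y : ℂ) ^ pt k σ t *
        LSeries (fun n ↦ (vonMangoldt n : ℂ)) (pt k σ t)) := by
  set F : ℕ → ℝ → ℂ := fun n t ↦ Gamma (gpt k m σ t) * (Y : ℂ) ^ pt k σ t *
    LSeries.term (fun n ↦ (vonMangoldt n : ℂ)) (pt k σ t) n with hF
  have hG := integrable_Gamma_gpt (m := m) hk hσ
  have hterm : ∀ n t, LSeries.term (fun n ↦ (vonMangoldt n : ℂ)) (pt k σ t) n =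
      vonMangoldt n / (n : ℂ) ^ pt k σ t := fun n t ↦ by
    rcases eq_or_ne n 0 with rfl | hn
    · simp
    · rw [LSeries.term_of_ne_zero hn]
  have hnorm : ∀ n t, ‖F n t‖ = ‖Gamma (gpt k m σ t)‖ * Y ^ σ *
      ‖LSeries.term (fun n ↦ (vonMangoldt n : ℂ)) σ n‖ := fun n t ↦ by
    rw [hF]
    simp only
    rw [norm_mul, norm_mul, norm_cpow_pt hY, LSeries.norm_term_eq, LSeries.norm_term_eq]
    simp
  have hmeas : ∀ n, Continuous (F n) := fun n ↦ by
    rcases eq_or_ne n 0 with rfl | hn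
    · simp only [hF, LSeries.term_zero, mul_zero]; fun_prop
    · have hn' : (0 : ℝ) < n := by positivity
      simp only [hF, hterm]
      refine ((continuous_Gamma_gpt hk hσ).mul (continuous_cpow_pt hY)).mul
        (continuous_const.div (continuous_cpow_pt hn') fun t ↦ ?_)
      have hpos := norm_cpow_pt (k := k) (σ := σ) (t := t) hn'
      rw [ofReal_natCast] at hpos
      rw [← norm_pos_iff, hpos]
      positivity
  have hint : ∀ n, Integrable (F n) := fun n ↦ by
    refine ((hG.norm.mul_const (Y ^ σ)).mul_const
      ‖LSeries.term (fun n ↦ (vonMangoldt n : ℂ)) σ n‖).mono' (hmeas n).aestronglyMeasurable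
      (ae_of_all _ fun t ↦ (hnorm n t).le)
  have hsum : Summable fun n ↦ ∫ t, ‖F n t‖ := by
    simp only [hnorm, integral_mul_const]
    refine Summable.mul_left _ ?_
    exact (ArithmeticFunction.LSeriesSummable_vonMangoldt (s := σ) (by simpa using hσ)).norm
  have key := (hasSum_integral_of_summable_integral_norm hint hsum).const_smul
    (1 / (2 * Real.pi) : ℝ)
  have e1 : ∀ n : ℕ, ((vonMangoldt n * ker k m (n / Y) : ℝ) : ℂ) =
      (1 / (2 * Real.pi) : ℝ) • ∫ t, F n t := fun n ↦ by
    rcases eq_or_ne n 0 with rfl | hn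
    · simp [hF]
    · have hn' : (0 : ℝ) < n := by positivity
      rw [ofReal_mul, ker_eq_integral hk hσ hn' hY, mul_smul_comm, ← integral_const_mul]
      congr 1
      refine integral_congr_ae (ae_of_all _ fun t ↦ ?_)
      simp only [hF, hterm, ofReal_natCast]
      ring
  have e2 : (∫ t : ℝ, Gamma (gpt k m σ t) * (Y : ℂ) ^ pt k σ t *
      LSeries (fun n ↦ (vonMangoldt n : ℂ)) (pt k σ t)) = ∫ t, ∑' n, F n t := by
    refine integral_congr_ae (ae_of_all _ fun t ↦ ?_)
    simp only [hF, tsum_mul_left]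
    rfl
  rw [e2, funext e1]
  exact key

/-- The part of the explicit formula coming from the pole `1/(s-1) = ∫₁^∞ x^{-s} dx`. -/
lemma integral_ker_Ioi_one {k m : ℕ} (hk : 1 ≤ k) {σ : ℝ} (hσ : 1 < σ) {Y : ℝ} (hY : 0 < Y) :
    ((∫ x in Ioi (1 : ℝ), ker k m (x / Y) : ℝ) : ℂ) =
      (1 / (2 * Real.pi) : ℝ) • ∫ t : ℝ, Gamma (gpt k m σ t) * (Y : ℂ) ^ pt k σ t *
        (1 / (pt k σ t - 1)) := by
  have hG := integrable_Gamma_gpt (m := m) hk hσ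
  rw [← integral_complex_ofReal]
  have h1 : ∫ x in Ioi (1 : ℝ), (ker k m (x / Y) : ℂ) = ∫ x in Ioi (1 : ℝ),
      (1 / (2 * Real.pi) : ℝ) • ∫ t : ℝ, Gamma (gpt k m σ t) *
        ((Y : ℂ) ^ pt k σ t / (x : ℂ) ^ pt k σ t) :=
    setIntegral_congr_fun measurableSet_Ioi fun x hx ↦
      ker_eq_integral hk hσ (lt_trans one_pos hx) hY
  rw [h1, integral_smul, integral_integral_swap]
  · congr 1
    refine integral_congr_ae (ae_of_all _ fun t ↦ ?_)
    simp only
    have h2 : ∀ x : ℝ, Gamma (gpt k m σ t) * ((Y : ℂ) ^ pt k σ t / (x : ℂ) ^ pt k σ t) =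
        Gamma (gpt k m σ t) * (Y : ℂ) ^ pt k σ t * (x : ℂ) ^ (-pt k σ t) := fun x ↦ by
      rw [cpow_neg]; ring
    simp only [h2]
    rw [integral_const_mul, integral_Ioi_cpow_of_lt (by simpa using hσ) one_pos]
    congr 1
    have hne : pt k σ t - 1 ≠ 0 := sub_ne_zero.mpr (pt_ne_one hσ t)
    have hne' : -pt k σ t + 1 ≠ 0 := by
      rw [← neg_ne_zero]; simpa [sub_eq_add_neg, add_comm] using hne
    simp only [ofReal_one, one_cpow]
    field_simp
    ring
  · have hp : Integrable (fun z : ℝ × ℝ ↦ (z.1 ^ (-σ)) * (‖Gamma (gpt k m σ z.2)‖ * Y ^ σ))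
        ((volume.restrict (Ioi (1 : ℝ))).prod volume) :=
      Integrable.mul_prod (f := fun x : ℝ ↦ x ^ (-σ))
        (integrableOn_Ioi_rpow_of_lt (by linarith) one_pos) (hG.norm.mul_const _)
    refine hp.mono' ?_ ?_
    · have m1 : Measurable fun z : ℝ × ℝ ↦ pt k σ z.2 :=
        (continuous_pt k σ).measurable.comp measurable_snd
      have m2 : Measurable fun z : ℝ × ℝ ↦ Gamma (gpt k m σ z.2) :=
        (continuous_Gamma_gpt hk hσ).measurable.comp measurable_snd
      have m3 : Measurable fun z : ℝ × ℝ ↦ (z.1 : ℂ) := measurable_ofReal.comp measurable_fst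
      exact (m2.mul ((measurable_const.pow m1).div (m3.pow m1))).aestronglyMeasurable
    · have : ∀ᵐ z : ℝ × ℝ ∂((volume.restrict (Ioi (1 : ℝ))).prod volume), z.1 ∈ Ioi (1 : ℝ) :=
        Measure.quasiMeasurePreserving_fst.ae (ae_restrict_mem measurableSet_Ioi)
      filter_upwards [this] with z hz
      have hz0 : 0 < z.1 := lt_trans one_pos hz
      simp only [Function.uncurry]
      rw [norm_mul, norm_div, norm_cpow_pt hY, norm_cpow_pt hz0, Real.rpow_neg hz0.le]
      refine le_of_eq ?_
      ring

/-- `∑ Λ(n) f(n/Y) - ∫₁^∞ f(x/Y) dx` as an integral over the line `Re s = σ`. -/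
lemma explicit_formula {k m : ℕ} (hk : 1 ≤ k) {σ : ℝ} (hσ : 1 < σ)
    {Y : ℝ} (hY : 0 < Y) :
    ((∑' n : ℕ, vonMangoldt n * ker k m (n / Y) - ∫ x in Ioi (1 : ℝ), ker k m (x / Y) : ℝ) : ℂ) =
      (1 / (2 * Real.pi) : ℝ) • ∫ t : ℝ, Gamma (gpt k m σ t) * regLogDeriv (pt k σ t) *
        (Y : ℂ) ^ pt k σ t := by
  have hG := integrable_Gamma_gpt (m := m) hk hσ
  have hint2 : Integrable fun t ↦ Gamma (gpt k m σ t) * (Y : ℂ) ^ pt k σ t *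
      (1 / (pt k σ t - 1)) := by
    have hc : Continuous fun t ↦ Gamma (gpt k m σ t) * (Y : ℂ) ^ pt k σ t *
      (1 / (pt k σ t - 1)) :=
      ((continuous_Gamma_gpt hk hσ).mul (continuous_cpow_pt hY)).mul
        (continuous_const.div ((continuous_pt k σ).sub continuous_const)
          fun t ↦ sub_ne_zero.mpr (pt_ne_one hσ t))
    refine ((hG.norm.mul_const (Y ^ σ)).mul_const (1 / (σ - 1))).mono' hc.aestronglyMeasurable
      (ae_of_all _ fun t ↦ ?_)
    rw [norm_mul, norm_mul, norm_cpow_pt hY, norm_div, norm_one]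
    have : σ - 1 ≤ ‖pt k σ t - 1‖ := by
      have := (le_abs_self _).trans (abs_re_le_norm (pt k σ t - 1))
      simpa using this
    have : 0 < σ - 1 := by linarith
    gcongr
  have hint1 : Integrable fun t ↦ Gamma (gpt k m σ t) * (Y : ℂ) ^ pt k σ t *
      LSeries (fun n ↦ (vonMangoldt n : ℂ)) (pt k σ t) := by
    have hcontr : Continuous fun t ↦ regLogDeriv (pt k σ t) := continuous_iff_continuousAt.mpr
      fun t ↦ ContinuousAt.comp (g := regLogDeriv)
        (hasDerivAt_regLogDeriv (by simpa using hσ.le)).continuousAt (continuous_pt k σ).continuousAt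
    have hL : ∀ t, LSeries (fun n ↦ (vonMangoldt n : ℂ)) (pt k σ t) =
        regLogDeriv (pt k σ t) + 1 / (pt k σ t - 1) := fun t ↦ by
      rw [← regLogDeriv_eq (by simpa using hσ)]; ring
    have hc : Continuous fun t ↦ Gamma (gpt k m σ t) * (Y : ℂ) ^ pt k σ t *
        LSeries (fun n ↦ (vonMangoldt n : ℂ)) (pt k σ t) := by
      simp only [hL]
      exact ((continuous_Gamma_gpt hk hσ).mul (continuous_cpow_pt hY)).mul
        (hcontr.add (continuous_const.div ((continuous_pt k σ).sub continuous_const)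
          fun t ↦ sub_ne_zero.mpr (pt_ne_one hσ t)))
    refine ((hG.norm.mul_const (Y ^ σ)).mul_const
      (∑' n, ‖LSeries.term (fun n ↦ (vonMangoldt n : ℂ)) σ n‖)).mono' hc.aestronglyMeasurable
      (ae_of_all _ fun t ↦ ?_)
    rw [norm_mul, norm_mul, norm_cpow_pt hY]
    gcongr
    have hs := (ArithmeticFunction.LSeriesSummable_vonMangoldt (s := pt k σ t)
      (by simpa using hσ)).norm
    refine (norm_tsum_le_tsum_norm hs).trans (le_of_eq ?_)
    refine tsum_congr fun n ↦ ?_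
    rw [LSeries.norm_term_eq, LSeries.norm_term_eq]
    simp
  rw [ofReal_sub, ofReal_tsum, (hasSum_vonMangoldt_ker hk hσ hY).tsum_eq,
    integral_ker_Ioi_one hk hσ hY, ← smul_sub, ← integral_sub hint1 hint2]
  congr 1
  refine integral_congr_ae (ae_of_all _ fun t ↦ ?_)
  simp only
  rw [← regLogDeriv_eq (by simpa using hσ)]
  ring

/-- One integration by parts on the line `Re s = σ` gains a factor `1/log Y`, uniformly in
`1 < σ ≤ 2`. -/
lemma exists_integral_line_le {k : ℕ} (m : ℕ) (hk : 1 ≤ k) : ∃ C : ℝ, 0 < C ∧ ∀ σ Y : ℝ, 1 < σ →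
    σ ≤ 2 → 1 < Y → ‖∫ t : ℝ, Gamma (gpt k m σ t) * regLogDeriv (pt k σ t) * (Y : ℂ) ^ pt k σ t‖ ≤
      C * Y ^ σ / Real.log Y := by
  obtain ⟨A, hA, hreg⟩ := exists_norm_regLogDeriv_le
  have hkR : (1 : ℝ) ≤ k := by exact_mod_cast hk
  obtain ⟨B, hB, hGam⟩ := exists_norm_deriv_Gamma_le 26 (m + 1 / k) (m + 2 / k) (by positivity)
  set J := ∫ t : ℝ, 1 / (1 + |t|) ^ 2 with hJ
  have hJ0 : 0 ≤ J := integral_nonneg fun t ↦ by positivity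
  set D := 2 * (k * (B * (A * (k : ℝ) ^ 24))) with hD
  have hD0 : 0 < D := by positivity
  refine ⟨D * J + 1, by positivity, fun σ Y hσ hσ2 hY ↦ ?_⟩
  have hY0 : 0 < Y := by linarith
  have hlog : 0 < Real.log Y := Real.log_pos hY
  -- pointwise bounds on the two factors and their derivatives
  have hg : ∀ t, ‖Gamma (gpt k m σ t)‖ ≤ B / (1 + |t|) ^ 26 ∧
      ‖deriv Gamma (gpt k m σ t)‖ ≤ B / (1 + |t|) ^ 26 := fun t ↦ by
    have := hGam (gpt k m σ t) (by rw [gpt_re]; gcongr) (by rw [gpt_re]; gcongr)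
    simpa using this
  have hr : ∀ t, ‖regLogDeriv (pt k σ t)‖ ≤ A * (k : ℝ) ^ 24 * (1 + |t|) ^ 24 ∧
      ‖deriv regLogDeriv (pt k σ t)‖ ≤ A * (k : ℝ) ^ 24 * (1 + |t|) ^ 24 := fun t ↦ by
    have := hreg (pt k σ t) (by simpa using hσ) (by simpa using hσ2)
    have hle : A * (1 + |(pt k σ t).im|) ^ 24 ≤ A * (k : ℝ) ^ 24 * (1 + |t|) ^ 24 := by
      rw [pt_im, abs_mul, Nat.abs_cast, mul_assoc, ← mul_pow]
      have := abs_nonneg t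
      gcongr
      nlinarith
    exact ⟨this.1.trans hle, this.2.trans hle⟩
  have hprod : ∀ t : ℝ, B / (1 + |t|) ^ 26 * (A * (k : ℝ) ^ 24 * (1 + |t|) ^ 24) =
      B * (A * (k : ℝ) ^ 24) * (1 / (1 + |t|) ^ 2) := fun t ↦ by
    have : 0 < 1 + |t| := by positivity
    field_simp
  set u : ℝ → ℂ := fun t ↦ Gamma (gpt k m σ t) * regLogDeriv (pt k σ t) with hu
  set u' : ℝ → ℂ := fun t ↦ deriv Gamma (gpt k m σ t) * I * regLogDeriv (pt k σ t) +
    Gamma (gpt k m σ t) * (deriv regLogDeriv (pt k σ t) * (k * I)) with hu'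
  set q : ℂ := k * I * (Real.log Y : ℝ) with hq
  have hq0 : q ≠ 0 := by
    have : (k : ℂ) ≠ 0 := by exact_mod_cast (by positivity : k ≠ 0)
    have : ((Real.log Y : ℝ) : ℂ) ≠ 0 := by exact_mod_cast hlog.ne'
    simp_all [I_ne_zero]
  set v : ℝ → ℂ := fun t ↦ (Y : ℂ) ^ pt k σ t / q with hv
  have hYc : (Y : ℂ) ≠ 0 := by exact_mod_cast hY0.ne'
  have hderu : ∀ t, HasDerivAt u (u' t) t := fun t ↦ by
    have h1 := (differentiableAt_Gamma_of_re_pos (gpt_re_pos (m := m) hk hσ t)).hasDerivAt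
    have h2 := (hasDerivAt_regLogDeriv (s := pt k σ t) (by simpa using hσ.le)).differentiableAt.hasDerivAt
    exact (h1.comp t (hasDerivAt_gpt k m σ t)).mul (h2.comp t (hasDerivAt_pt k σ t))
  have hderv : ∀ t, HasDerivAt v ((Y : ℂ) ^ pt k σ t) t := fun t ↦ by
    have h0 : HasDerivAt (fun z : ℂ ↦ (Y : ℂ) ^ z) ((Y : ℂ) ^ pt k σ t * log Y) (pt k σ t) := by
      simpa using (hasDerivAt_id _).const_cpow (Or.inl hYc)
    have h1 := (h0.comp t (hasDerivAt_pt k σ t)).div_const q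
    have h2 : (Y : ℂ) ^ pt k σ t * log Y * (k * I) / q = (Y : ℂ) ^ pt k σ t := by
      rw [div_eq_iff hq0, hq, ofReal_log hY0.le]
      ring
    rw [h2] at h1
    exact h1
  have hcg := continuous_Gamma_gpt (m := m) hk hσ
  have hcu : Continuous u := continuous_iff_continuousAt.mpr fun t ↦ (hderu t).continuousAt
  have hcv : Continuous v := continuous_iff_continuousAt.mpr fun t ↦ (hderv t).continuousAt
  have hcu' : Continuous u' := by
    have hcr : Continuous fun t ↦ regLogDeriv (pt k σ t) := continuous_iff_continuousAt.mpr
      fun t ↦ ContinuousAt.comp (g := regLogDeriv)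
        (hasDerivAt_regLogDeriv (by simpa using hσ.le)).continuousAt (continuous_pt k σ).continuousAt
    have hcr' : Continuous fun t ↦ deriv regLogDeriv (pt k σ t) :=
      continuousOn_deriv_regLogDeriv.comp_continuous (continuous_pt k σ) fun t ↦ by simpa using hσ
    have hcG' : Continuous fun t ↦ deriv Gamma (gpt k m σ t) := by
      have hU : IsOpen {z : ℂ | 0 < z.re} := isOpen_lt continuous_const continuous_re
      have hd : DifferentiableOn ℂ Gamma {z : ℂ | 0 < z.re} := fun z hz ↦
        (differentiableAt_Gamma_of_re_pos hz).differentiableWithinAt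
      exact (hd.deriv hU).continuousOn.comp_continuous
        (continuous_iff_continuousAt.mpr fun t ↦ (hasDerivAt_gpt k m σ t).continuousAt)
        fun t ↦ gpt_re_pos hk hσ t
    rw [hu']
    fun_prop
  have hbu : ∀ t, ‖u t‖ ≤ D * (1 / (1 + |t|) ^ 2) := fun t ↦ by
    rw [hu]; simp only; rw [norm_mul]
    calc _ ≤ B / (1 + |t|) ^ 26 * (A * (k : ℝ) ^ 24 * (1 + |t|) ^ 24) := by
          gcongr
          exacts [(hg t).1, (hr t).1]
      _ = B * (A * (k : ℝ) ^ 24) * (1 / (1 + |t|) ^ 2) := hprod t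
      _ ≤ _ := by
          gcongr
          rw [hD]
          have : 0 ≤ B * (A * (k : ℝ) ^ 24) := by positivity
          nlinarith
  have hbu' : ∀ t, ‖u' t‖ ≤ D * (1 / (1 + |t|) ^ 2) := fun t ↦ by
    rw [hu']; simp only
    refine (norm_add_le _ _).trans ?_
    rw [norm_mul, norm_mul, norm_mul, norm_mul, norm_mul, norm_I, Complex.norm_natCast, mul_one, mul_one]
    have hx := hprod t
    set P := B * (A * (k : ℝ) ^ 24) * (1 / (1 + |t|) ^ 2) with hP
    have hP0 : 0 ≤ P := by positivity
    have e1 : ‖deriv Gamma (gpt k m σ t)‖ * ‖regLogDeriv (pt k σ t)‖ ≤ P := by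
      rw [← hx]; gcongr
      exacts [(hg t).2, (hr t).1]
    have e2 : ‖Gamma (gpt k m σ t)‖ * ‖deriv regLogDeriv (pt k σ t)‖ ≤ P := by
      rw [← hx]; gcongr
      exacts [(hg t).1, (hr t).2]
    have e3 : D * (1 / (1 + |t|) ^ 2) = 2 * (k * P) := by rw [hD, hP]; ring
    rw [e3, ← mul_assoc]
    nlinarith
  have hint : ∀ w : ℝ → ℂ, Continuous w → (∀ t, ‖w t‖ ≤ D * (1 / (1 + |t|) ^ 2)) →
      Integrable w := fun w hw hb ↦
    (integrable_one_add_abs_sq.const_mul D).mono' hw.aestronglyMeasurable (ae_of_all _ hb)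
  have hnv : ∀ t, ‖v t‖ ≤ Y ^ σ / Real.log Y := fun t ↦ by
    rw [hv]; simp only
    rw [norm_div, norm_cpow_pt hY0, hq, norm_mul, norm_mul, norm_I, Complex.norm_natCast, norm_real,
      Real.norm_eq_abs, abs_of_pos hlog]
    gcongr
    nlinarith
  have hiu := hint u hcu hbu
  have hiu' := hint u' hcu' hbu'
  have hibp := integral_mul_deriv_eq_deriv_mul_of_integrable (u := u) (v := v) (u' := u')
    (v' := fun t ↦ (Y : ℂ) ^ pt k σ t) (fun t _ ↦ hderu t) (fun t _ ↦ hderv t)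
    (hiu.mul_bdd (c := Y ^ σ) (continuous_cpow_pt hY0).aestronglyMeasurable
      (ae_of_all _ fun t ↦ (norm_cpow_pt hY0).le))
    (hiu'.mul_bdd (c := Y ^ σ / Real.log Y) hcv.aestronglyMeasurable (ae_of_all _ hnv))
    (hiu.mul_bdd (c := Y ^ σ / Real.log Y) hcv.aestronglyMeasurable (ae_of_all _ hnv))
  rw [hibp, norm_neg]
  have hYσ : 0 ≤ Y ^ σ / Real.log Y := by positivity
  calc _ ≤ ∫ t : ℝ, D * (1 / (1 + |t|) ^ 2) * (Y ^ σ / Real.log Y) := by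
        refine norm_integral_le_of_norm_le
          ((integrable_one_add_abs_sq.const_mul D).mul_const _) (ae_of_all _ fun t ↦ ?_)
        rw [norm_mul]
        gcongr
        exacts [hbu' t, hnv t]
    _ = D * J * (Y ^ σ / Real.log Y) := by
        rw [integral_mul_const, integral_const_mul]
    _ ≤ (D * J + 1) * (Y ^ σ / Real.log Y) := by gcongr; linarith
    _ = _ := by ring

/-- The prime number theorem for the smooth weight, with relative error `O(1/log Y)`. -/
lemma exists_vonMangoldt_ker_sub_le {k : ℕ} (m : ℕ) (hk : 1 ≤ k) : ∃ C : ℝ, 0 < C ∧ ∀ Y : ℝ,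
    Real.exp 1 ≤ Y →
    |∑' n : ℕ, vonMangoldt n * ker k m (n / Y) - ∫ x in Ioi (1 : ℝ), ker k m (x / Y)| ≤
      C * (Y / Real.log Y) := by
  obtain ⟨C, hC, h⟩ := exists_integral_line_le m hk
  refine ⟨C * Real.exp 1, by positivity, fun Y hY ↦ ?_⟩
  have hY0 : 0 < Y := (Real.exp_pos 1).trans_le hY
  have hlog1 : 1 ≤ Real.log Y := by rwa [Real.le_log_iff_exp_le hY0]
  have hlog : 0 < Real.log Y := by linarith
  have hY1 : 1 < Y := by
    by_contra hcon
    have := Real.log_nonpos hY0.le (not_lt.mp hcon)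
    linarith
  set σ := 1 + 1 / Real.log Y with hσ
  have h1 : 1 < σ := by rw [hσ]; simp; exact hlog
  have h2 : σ ≤ 2 := by
    have : 1 / Real.log Y ≤ 1 := by rw [div_le_one hlog]; exact hlog1
    linarith
  have hpow : Y ^ σ = Y * Real.exp 1 := by
    rw [hσ, Real.rpow_add hY0, Real.rpow_one, Real.rpow_def_of_pos hY0,
      mul_one_div_cancel hlog.ne']
  have e := congrArg norm (explicit_formula (m := m) hk h1 hY0)
  rw [norm_real, Real.norm_eq_abs] at e
  rw [e, norm_smul, Real.norm_eq_abs]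
  have hpi : |1 / (2 * Real.pi)| ≤ 1 := by
    rw [abs_of_pos (by positivity), div_le_one (by positivity)]
    linarith [Real.pi_gt_three]
  calc _ ≤ 1 * (C * Y ^ σ / Real.log Y) := by
        gcongr
        exact h σ Y h1 h2 hY1
    _ = _ := by rw [hpow]; ring

/-! ### From `Λ` to primes -/

lemma summable_dyadic {α : ℝ} (h1 : 1 / 2 ≤ α) (h2 : α ≤ 1) : Summable fun i : ℤ ↦
    min (((2 : ℝ) ^ i) ^ (-(1 / 4) : ℝ)) (((2 : ℝ) ^ i) ^ (-2 : ℝ)) * ((2 : ℝ) ^ (i + 1)) ^ α := by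
  have hconv : ∀ (i : ℤ) (β : ℝ), ((2 : ℝ) ^ i) ^ β = (2 : ℝ) ^ (i * β) := fun i β ↦ by
    rw [← Real.rpow_intCast, ← Real.rpow_mul (by norm_num)]
  have hgeom : ∀ β : ℝ, 0 < β → Summable fun n : ℕ ↦ 2 * (2 : ℝ) ^ (-((n : ℝ) * β)) := fun β hβ ↦ by
    have : ∀ n : ℕ, (2 : ℝ) ^ (-((n : ℝ) * β)) = ((2 : ℝ) ^ (-β)) ^ n := fun n ↦ by
      rw [← Real.rpow_natCast, ← Real.rpow_mul (by norm_num)]; congr 1; ring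
    simp only [this]
    exact (summable_geometric_of_lt_one (by positivity)
      (Real.rpow_lt_one_of_one_lt_of_neg (by norm_num) (by linarith))).mul_left 2
  have hmul : ∀ x y : ℝ, x ≤ y + 1 → (2 : ℝ) ^ x ≤ 2 * (2 : ℝ) ^ y := fun x y h ↦ by
    calc (2 : ℝ) ^ x ≤ 2 ^ (y + 1) := Real.rpow_le_rpow_of_exponent_le (by norm_num) h
      _ = _ := by rw [Real.rpow_add (by norm_num), Real.rpow_one, mul_comm]
  refine Summable.of_nat_of_neg ?_ ?_
  · refine Summable.of_nonneg_of_le (fun n ↦ by positivity) (fun n ↦ ?_) (hgeom 1 one_pos)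
    refine (mul_le_mul_of_nonneg_right (min_le_right _ _) (by positivity)).trans ?_
    rw [hconv, hconv, ← Real.rpow_add (by norm_num)]
    apply hmul
    push_cast
    have : (0 : ℝ) ≤ n := n.cast_nonneg
    nlinarith
  · refine Summable.of_nonneg_of_le (fun n ↦ by positivity) (fun n ↦ ?_)
      (hgeom (1 / 4) (by norm_num))
    refine (mul_le_mul_of_nonneg_right (min_le_left _ _) (by positivity)).trans ?_
    rw [hconv, hconv, ← Real.rpow_add (by norm_num)]
    apply hmul
    push_cast
    have : (0 : ℝ) ≤ n := n.cast_nonneg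
    nlinarith

/-- Dyadic summation: a weight `H(u) ≪ min(u^{-1/4}, u^{-2})` against a nonnegative sequence with
partial sums `≪ x^α` gives `∑ a_n H(n/Y) ≪ Y^α`. -/
lemma exists_sum_weight_le {α : ℝ} (h1 : 1 / 2 ≤ α) (h2 : α ≤ 1) {K C : ℝ} (hK : 0 < K)
    (hC : 0 < C) {a : ℕ → ℝ} (ha : ∀ n, 0 ≤ a n) (ha0 : a 0 = 0)
    (hsum : ∀ x : ℝ, 0 ≤ x → ∑ n ∈ Finset.Ioc 0 ⌊x⌋₊, a n ≤ C * x ^ α)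
    {H : ℝ → ℝ} (hH0 : ∀ u, 0 ≤ u → 0 ≤ H u) (hH1 : ∀ u, 0 < u → H u ≤ K * u ^ (-(1 / 4) : ℝ))
    (hH2 : ∀ u, 0 < u → H u ≤ K * u ^ (-2 : ℝ)) : ∃ D : ℝ, 0 < D ∧ ∀ Y : ℝ, 0 < Y →
      (Summable fun n : ℕ ↦ a n * H (n / Y)) ∧ ∑' n : ℕ, a n * H (n / Y) ≤ D * Y ^ α := by
  set c : ℤ → ℝ := fun i ↦ min (((2 : ℝ) ^ i) ^ (-(1 / 4) : ℝ)) (((2 : ℝ) ^ i) ^ (-2 : ℝ)) with hc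
  have hc0 : ∀ i, 0 ≤ c i := fun i ↦ by rw [hc]; positivity
  have hs := summable_dyadic h1 h2
  set S := ∑' i : ℤ, c i * ((2 : ℝ) ^ (i + 1)) ^ α with hS
  have hS0 : 0 ≤ S := tsum_nonneg fun i ↦ mul_nonneg (hc0 i) (by positivity)
  refine ⟨K * C * S + 1, by positivity, fun Y hY ↦ ?_⟩
  have hex : ∀ n : ℕ, ∃ i : ℤ, 0 < n → (2 : ℝ) ^ i < n / Y ∧ (n : ℝ) / Y ≤ (2 : ℝ) ^ (i + 1) :=
    fun n ↦ by
      rcases Nat.eq_zero_or_pos n with rfl | hn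
      · exact ⟨0, fun h ↦ absurd h (lt_irrefl _)⟩
      · have : (0 : ℝ) < n / Y := by positivity
        obtain ⟨i, hi⟩ := exists_mem_Ioc_zpow this (one_lt_two (α := ℝ))
        exact ⟨i, fun _ ↦ hi⟩
  choose ι hι using hex
  have hHc : ∀ n : ℕ, 0 < n → H (n / Y) ≤ K * c (ι n) := fun n hn ↦ by
    have hu : (0 : ℝ) < n / Y := by positivity
    have hl := (hι n hn).1
    have h2i : (0 : ℝ) < 2 ^ ι n := by positivity
    rw [hc]
    simp only
    rw [mul_min_of_nonneg _ _ hK.le]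
    refine le_min ((hH1 _ hu).trans ?_) ((hH2 _ hu).trans ?_)
    · gcongr ?_ * ?_
      exact Real.rpow_le_rpow_of_nonpos h2i hl.le (by norm_num)
    · gcongr ?_ * ?_
      exact Real.rpow_le_rpow_of_nonpos h2i hl.le (by norm_num)
  have hterm : ∀ n : ℕ, a n * H (n / Y) ≤ if 0 < n then a n * (K * c (ι n)) else 0 := fun n ↦ by
    split_ifs with hn
    · exact mul_le_mul_of_nonneg_left (hHc n hn) (ha n)
    · rw [Nat.eq_zero_of_not_pos hn, ha0, zero_mul]
  have hbound : ∀ s : Finset ℕ, ∑ n ∈ s, a n * H (n / Y) ≤ (K * C * S + 1) * Y ^ α := fun s ↦ by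
    calc ∑ n ∈ s, a n * H (n / Y) ≤ ∑ n ∈ s, if 0 < n then a n * (K * c (ι n)) else 0 :=
          Finset.sum_le_sum fun n _ ↦ hterm n
      _ = ∑ n ∈ s.filter (0 < ·), a n * (K * c (ι n)) := by rw [Finset.sum_filter]
      _ = ∑ i ∈ (s.filter (0 < ·)).image ι, ∑ n ∈ (s.filter (0 < ·)).filter (ι · = i),
            a n * (K * c (ι n)) :=
          (Finset.sum_fiberwise_of_maps_to (fun n hn ↦ Finset.mem_image_of_mem _ hn) _).symm
      _ ≤ ∑ i ∈ (s.filter (0 < ·)).image ι,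
            K * C * Y ^ α * (c i * ((2 : ℝ) ^ (i + 1)) ^ α) := by
          refine Finset.sum_le_sum fun i _ ↦ ?_
          have e1 : ∑ n ∈ (s.filter (0 < ·)).filter (ι · = i), a n * (K * c (ι n)) =
              (∑ n ∈ (s.filter (0 < ·)).filter (ι · = i), a n) * (K * c i) := by
            rw [Finset.sum_mul]
            refine Finset.sum_congr rfl fun n hn ↦ ?_
            rw [(Finset.mem_filter.mp hn).2]
          have e2 : ∑ n ∈ (s.filter (0 < ·)).filter (ι · = i), a n ≤
              C * ((2 : ℝ) ^ (i + 1) * Y) ^ α := by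
            refine le_trans (Finset.sum_le_sum_of_subset_of_nonneg ?_ fun n _ _ ↦ ha n)
              (hsum _ (by positivity))
            intro n hn
            simp only [Finset.mem_filter] at hn
            obtain ⟨⟨_, hn0⟩, hni⟩ := hn
            have := (hι n hn0).2
            rw [hni, div_le_iff₀ hY] at this
            exact Finset.mem_Ioc.mpr ⟨hn0, Nat.le_floor this⟩
          rw [e1]
          refine (mul_le_mul_of_nonneg_right e2 (mul_nonneg hK.le (hc0 i))).trans (le_of_eq ?_)
          rw [Real.mul_rpow (by positivity) hY.le]
          ring
      _ = K * C * Y ^ α * ∑ i ∈ (s.filter (0 < ·)).image ι, c i * ((2 : ℝ) ^ (i + 1)) ^ α := by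
          rw [Finset.mul_sum]
      _ ≤ K * C * Y ^ α * S := by
          gcongr
          exact hs.sum_le_tsum _ fun i _ ↦ mul_nonneg (hc0 i) (by positivity)
      _ ≤ _ := by
          have : 0 < Y ^ α := by positivity
          nlinarith
  have hnn : ∀ n : ℕ, 0 ≤ a n * H (n / Y) := fun n ↦ mul_nonneg (ha n) (hH0 _ (by positivity))
  exact ⟨summable_of_sum_le hnn hbound, Real.tsum_le_of_sum_le hnn hbound⟩

lemma ker_nonneg (k m : ℕ) {u : ℝ} (hu : 0 ≤ u) : 0 ≤ ker k m u := by unfold ker; positivity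

/-- The weight `ker(u) (1 + |log u|)²`. -/
noncomputable def wker (k m : ℕ) (u : ℝ) : ℝ := ker k m u * (1 + |Real.log u|) ^ 2

lemma wker_nonneg (k m : ℕ) {u : ℝ} (hu : 0 ≤ u) : 0 ≤ wker k m u :=
  mul_nonneg (ker_nonneg k m hu) (by positivity)

lemma ker_le_wker (k m : ℕ) {u : ℝ} (hu : 0 ≤ u) : ker k m u ≤ wker k m u := by
  refine le_mul_of_one_le_right (ker_nonneg k m hu) (one_le_pow₀ ?_)
  linarith [abs_nonneg (Real.log u)]

/-- The exponent `-1/4` absorbs the logarithms at `u → 0`, and `-2` makes the dyadic sums converge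
at `u → ∞`. -/
lemma exists_wker_le {k : ℕ} (m : ℕ) (hk : 1 ≤ k) : ∃ K : ℝ, 0 < K ∧ ∀ u : ℝ, 0 < u →
    ker k m u ≤ K ∧ wker k m u ≤ K * u ^ (-(1 / 4) : ℝ) ∧ wker k m u ≤ K * u ^ (-2 : ℝ) := by
  set N : ℝ := ((k * m + 4).factorial : ℝ) with hN
  have hN0 : 0 < N := by rw [hN]; positivity
  refine ⟨81 + 4 * N, by positivity, fun u hu ↦ ?_⟩
  rcases le_total u 1 with h1 | h1
  · have hker : ker k m u ≤ 1 := by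
      unfold ker
      have e1 : u ^ (k * m) ≤ 1 := pow_le_one₀ hu.le h1
      have e2 : Real.exp (-u ^ k) ≤ 1 := by
        rw [Real.exp_le_one_iff]; linarith [pow_pos hu k]
      exact mul_le_one₀ e1 (Real.exp_pos _).le e2
    have hlog : 1 + |Real.log u| ≤ 9 * u ^ (-(1 / 8) : ℝ) := by
      have := (Real.abs_log_mul_self_rpow_lt u (1 / 8) hu h1 (by norm_num)).le
      rw [abs_mul, abs_of_pos (Real.rpow_pos_of_pos hu _)] at this
      have e : u ^ (-(1 / 8) : ℝ) * u ^ (1 / 8 : ℝ) = 1 := by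
        rw [← Real.rpow_add hu]; norm_num
      have e0 := Real.rpow_pos_of_pos hu (1 / 8 : ℝ)
      have e1 : u ^ (1 / 8 : ℝ) ≤ 1 := Real.rpow_le_one hu.le h1 (by norm_num)
      rw [← mul_le_mul_iff_left₀ e0, mul_assoc, e]
      norm_num at this ⊢
      nlinarith
    have hw : wker k m u ≤ 81 * u ^ (-(1 / 4) : ℝ) := by
      have e : (9 * u ^ (-(1 / 8) : ℝ)) ^ 2 = 81 * u ^ (-(1 / 4) : ℝ) := by
        rw [mul_pow, ← Real.rpow_natCast, ← Real.rpow_natCast (u ^ _), ← Real.rpow_mul hu.le]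
        norm_num
      rw [← e]
      calc wker k m u ≤ 1 * (1 + |Real.log u|) ^ 2 := by unfold wker; gcongr
        _ ≤ _ := by rw [one_mul]; gcongr
    have hmono : u ^ (-(1 / 4) : ℝ) ≤ u ^ (-2 : ℝ) :=
      Real.rpow_le_rpow_of_exponent_ge hu h1 (by norm_num)
    have := Real.rpow_pos_of_pos hu (-(1 / 4) : ℝ)
    exact ⟨by linarith, by nlinarith, by nlinarith⟩
  · have hexp : ker k m u * u ^ 4 ≤ N := by
      have e1 : Real.exp (-u ^ k) ≤ Real.exp (-u) := by
        gcongr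
        exact le_self_pow₀ h1 (by omega)
      have e2 := Real.pow_div_factorial_le_exp u hu.le (k * m + 4)
      rw [div_le_iff₀ (by positivity), ← hN] at e2
      unfold ker
      calc u ^ (k * m) * Real.exp (-u ^ k) * u ^ 4 = u ^ (k * m + 4) * Real.exp (-u ^ k) := by ring
        _ ≤ (Real.exp u * N) * Real.exp (-u) := by gcongr
        _ = N := by rw [mul_right_comm, ← Real.exp_add]; simp
    have hlog : 1 + |Real.log u| ≤ 2 * u := by
      rw [abs_of_nonneg (Real.log_nonneg h1)]
      linarith [Real.log_le_sub_one_of_pos hu]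
    have hk0 := ker_nonneg k m hu.le
    have hw : wker k m u ≤ 4 * N * u ^ (-2 : ℝ) := by
      have e : u ^ (-2 : ℝ) = (u ^ 2)⁻¹ := by
        rw [Real.rpow_neg hu.le]; norm_num
      rw [e, ← div_eq_mul_inv, le_div_iff₀ (by positivity)]
      calc wker k m u * u ^ 2 ≤ ker k m u * (2 * u) ^ 2 * u ^ 2 := by unfold wker; gcongr
        _ = 4 * (ker k m u * u ^ 4) := by ring
        _ ≤ 4 * N := by linarith
    have hmono : u ^ (-2 : ℝ) ≤ u ^ (-(1 / 4) : ℝ) :=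
      Real.rpow_le_rpow_of_exponent_le h1 (by norm_num)
    have := Real.rpow_pos_of_pos hu (-2 : ℝ)
    have h4 : 1 ≤ u ^ 4 := one_le_pow₀ h1
    exact ⟨by nlinarith, by nlinarith, by nlinarith⟩

/-- `log p` at primes `p`, and `0` elsewhere. -/
noncomputable def lp (n : ℕ) : ℝ := if n.Prime then Real.log n else 0

lemma lp_nonneg (n : ℕ) : 0 ≤ lp n := by
  unfold lp; split_ifs
  · exact Real.log_natCast_nonneg n
  · exact le_rfl

lemma lp_le_vonMangoldt (n : ℕ) : lp n ≤ vonMangoldt n := by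
  unfold lp; split_ifs with h
  · rw [ArithmeticFunction.vonMangoldt_apply_prime h]
  · exact ArithmeticFunction.vonMangoldt_nonneg

/-- Chebyshev's bound `θ(x) ≤ x log 4`, summed against the weight. -/
lemma exists_sum_lp_wker_le {k : ℕ} (m : ℕ) (hk : 1 ≤ k) : ∃ D : ℝ, 0 < D ∧ ∀ Y : ℝ, 0 < Y →
    (Summable fun n : ℕ ↦ lp n * wker k m (n / Y)) ∧
      ∑' n : ℕ, lp n * wker k m (n / Y) ≤ D * Y := by
  obtain ⟨K, hK, hw⟩ := exists_wker_le m hk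
  have := exists_sum_weight_le (α := 1) (by norm_num) le_rfl hK (C := Real.log 4)
    (Real.log_pos (by norm_num)) lp_nonneg (by simp [lp]) (fun x hx ↦ by
      have := Chebyshev.theta_le_log4_mul_x hx
      rw [Chebyshev.theta, Finset.sum_filter] at this
      simpa [lp] using this) (H := wker k m) (fun u hu ↦ wker_nonneg k m hu)
      (fun u hu ↦ (hw u hu).2.1) (fun u hu ↦ (hw u hu).2.2)
  simpa using this

/-- Proper prime powers contribute only `O(√Y)`. -/
lemma exists_sum_primePow_ker_le {k : ℕ} (m : ℕ) (hk : 1 ≤ k) : ∃ D : ℝ, 0 < D ∧ ∀ Y : ℝ, 0 < Y →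
    (Summable fun n : ℕ ↦ (vonMangoldt n - lp n) * ker k m (n / Y)) ∧
      ∑' n : ℕ, (vonMangoldt n - lp n) * ker k m (n / Y) ≤ D * √Y := by
  obtain ⟨K, hK, hw⟩ := exists_wker_le m hk
  obtain ⟨C, hC⟩ := Chebyshev.psi_sub_theta_le_mul_sqrt
  have := exists_sum_weight_le (α := 1 / 2) le_rfl (by norm_num) hK (C := max C 1)
    (by positivity) (a := fun n ↦ vonMangoldt n - lp n)
    (fun n ↦ sub_nonneg.mpr (lp_le_vonMangoldt n)) (by simp [lp]) (fun x hx ↦ by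
      have := hC x
      rw [Chebyshev.psi, Chebyshev.theta, Finset.sum_filter] at this
      rw [Finset.sum_sub_distrib, ← Real.sqrt_eq_rpow]
      have h2 : C * √x ≤ max C 1 * √x := by gcongr; exact le_max_left _ _
      refine le_trans ?_ (this.trans h2)
      simp [lp]) (H := ker k m) (fun u hu ↦ ker_nonneg k m hu)
      (fun u hu ↦ (ker_le_wker k m hu.le).trans (hw u hu).2.1)
      (fun u hu ↦ (ker_le_wker k m hu.le).trans (hw u hu).2.2)
  simpa [Real.sqrt_eq_rpow] using this

lemma summable_lp_ker {k : ℕ} (m : ℕ) (hk : 1 ≤ k) {Y : ℝ} (hY : 0 < Y) :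
    Summable fun n : ℕ ↦ lp n * ker k m (n / Y) := by
  obtain ⟨D, hD, h⟩ := exists_sum_lp_wker_le m hk
  refine Summable.of_nonneg_of_le
    (fun n ↦ mul_nonneg (lp_nonneg n) (ker_nonneg k m (by positivity))) (fun n ↦ ?_) (h Y hY).1
  exact mul_le_mul_of_nonneg_left (ker_le_wker k m (by positivity)) (lp_nonneg n)

lemma integrableOn_ker {k : ℕ} (m : ℕ) (hk : 1 ≤ k) : IntegrableOn (ker k m) (Ioi 0) := by
  have := integrableOn_rpow_mul_exp_neg_rpow (p := k) (s := (k * m : ℕ))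
    (by have : (0 : ℝ) ≤ (k * m : ℕ) := Nat.cast_nonneg _
        linarith) (by positivity)
  simp only [Real.rpow_natCast] at this
  exact this

lemma integral_ker {k : ℕ} (m : ℕ) (hk : 1 ≤ k) :
    ∫ u in Ioi (0 : ℝ), ker k m u = Real.Gamma (m + 1 / k) / k := by
  have h := integral_rpow_mul_exp_neg_rpow (p := k) (q := (k * m : ℕ)) (by positivity)
    (by have : (0 : ℝ) ≤ (k * m : ℕ) := Nat.cast_nonneg _
        linarith)
  have e : ((k * m : ℕ) + 1 : ℝ) / k = m + 1 / k := by
    have : (k : ℝ) ≠ 0 := by positivity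
    push_cast
    field_simp
  rw [e] at h
  simp only [Real.rpow_natCast] at h
  simp only [ker]
  rw [h]
  ring

/-- The integral over `(0, ∞)` is `Y Γ(m+1/k)/k`; dropping `(0, 1]` costs `O(1)`. -/
lemma exists_integral_ker_sub_le {k : ℕ} (m : ℕ) (hk : 1 ≤ k) : ∃ K : ℝ, 0 < K ∧ ∀ Y : ℝ, 0 < Y →
    |(∫ x in Ioi (1 : ℝ), ker k m (x / Y)) - Y * (Real.Gamma (m + 1 / k) / k)| ≤ K := by
  obtain ⟨K, hK, hw⟩ := exists_wker_le m hk
  refine ⟨K, hK, fun Y hY ↦ ?_⟩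
  have hint : IntegrableOn (fun x ↦ ker k m (x / Y)) (Ioi 0) := by
    have := (integrableOn_Ioi_comp_mul_left_iff (ker k m) 0 (inv_pos.mpr hY)).mpr
      (by simpa using integrableOn_ker m hk)
    simpa [div_eq_inv_mul] using this
  have htot : ∫ x in Ioi (0 : ℝ), ker k m (x / Y) = Y * (Real.Gamma (m + 1 / k) / k) := by
    have := integral_comp_mul_left_Ioi (ker k m) 0 (inv_pos.mpr hY)
    rw [mul_zero, integral_ker m hk, inv_inv, smul_eq_mul] at this
    simpa [div_eq_inv_mul] using this
  have hsplit : ∫ x in Ioi (0 : ℝ), ker k m (x / Y) =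
      (∫ x in Ioc (0 : ℝ) 1, ker k m (x / Y)) + ∫ x in Ioi (1 : ℝ), ker k m (x / Y) := by
    rw [← setIntegral_union (Ioc_disjoint_Ioi le_rfl) measurableSet_Ioi
      (hint.mono_set Ioc_subset_Ioi_self) (hint.mono_set (Ioi_subset_Ioi zero_le_one)),
      Ioc_union_Ioi_eq_Ioi zero_le_one]
  have hsmall : ‖∫ x in Ioc (0 : ℝ) 1, ker k m (x / Y)‖ ≤ K * volume.real (Ioc (0 : ℝ) 1) := by
    refine norm_setIntegral_le_of_norm_le_const (by simp) fun x hx ↦ ?_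
    have hx0 : 0 < x / Y := div_pos hx.1 hY
    rw [Real.norm_eq_abs, abs_of_nonneg (ker_nonneg k m hx0.le)]
    exact (hw _ hx0).1
  rw [← htot, hsplit, sub_add_cancel_right, abs_neg]
  simpa using hsmall

/-- The prime number theorem for primes weighted by `log p` and the smooth weight. -/
lemma exists_sum_lp_ker_sub_le {k : ℕ} (m : ℕ) (hk : 1 ≤ k) : ∃ C : ℝ, 0 < C ∧ ∀ Y : ℝ,
    Real.exp 1 ≤ Y →
    |∑' n : ℕ, lp n * ker k m (n / Y) - Y * (Real.Gamma (m + 1 / k) / k)| ≤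
      C * (Y / Real.log Y) := by
  obtain ⟨C₁, hC₁, h₁⟩ := exists_vonMangoldt_ker_sub_le m hk
  obtain ⟨C₂, hC₂, h₂⟩ := exists_sum_primePow_ker_le m hk
  obtain ⟨C₃, hC₃, h₃⟩ := exists_integral_ker_sub_le m hk
  refine ⟨C₁ + C₂ * 2 + C₃, by positivity, fun Y hY ↦ ?_⟩
  have hY0 : 0 < Y := (Real.exp_pos 1).trans_le hY
  have hlog : 0 < Real.log Y := by
    have : 1 ≤ Real.log Y := by rwa [Real.le_log_iff_exp_le hY0]
    linarith
  have hs2 := (h₂ Y hY0).1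
  have hs1 := summable_lp_ker m hk hY0
  have hΛ : ∑' n : ℕ, vonMangoldt n * ker k m (n / Y) = ∑' n : ℕ, lp n * ker k m (n / Y) +
      ∑' n : ℕ, (vonMangoldt n - lp n) * ker k m (n / Y) := by
    rw [← hs1.tsum_add hs2]
    exact tsum_congr fun n ↦ by ring
  have hnn : 0 ≤ ∑' n : ℕ, (vonMangoldt n - lp n) * ker k m (n / Y) :=
    tsum_nonneg fun n ↦ mul_nonneg (sub_nonneg.mpr (lp_le_vonMangoldt n))
      (ker_nonneg k m (by positivity))
  have hsqrt : √Y ≤ 2 * (Y / Real.log Y) := by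
    have e : Real.log Y ≤ 2 * √Y := by
      have := Real.log_le_sub_one_of_pos (Real.sqrt_pos.mpr hY0)
      rw [Real.log_sqrt hY0.le] at this
      linarith
    rw [← mul_div_assoc, le_div_iff₀ hlog]
    nlinarith [Real.sq_sqrt hY0.le, Real.sqrt_nonneg Y]
  have hone : 1 ≤ Y / Real.log Y := by
    rw [one_le_div hlog]
    linarith [Real.log_le_sub_one_of_pos hY0]
  have a1 := abs_le.mp (h₁ Y hY)
  have a2 := (h₂ Y hY0).2
  have a3 := abs_le.mp (h₃ Y hY0)
  rw [hΛ] at a1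
  rw [abs_le]
  constructor <;> nlinarith

/-- Indicator of the primes. -/
noncomputable def pr (n : ℕ) : ℝ := if n.Prime then 1 else 0

lemma pr_nonneg (n : ℕ) : 0 ≤ pr n := by unfold pr; split_ifs <;> norm_num

lemma pr_le (n : ℕ) : pr n ≤ 2 * lp n := by
  unfold pr lp
  split_ifs with h
  · have h2 : Real.log 2 ≤ Real.log n :=
      Real.log_le_log (by norm_num) (by exact_mod_cast h.two_le)
    linarith [Real.log_two_gt_d9]
  · simp

/-- Crude upper bound for the prime sum, valid for every `Y > 0`. -/
lemma exists_sum_pr_ker_le {k : ℕ} (m : ℕ) (hk : 1 ≤ k) : ∃ D : ℝ, 0 < D ∧ ∀ Y : ℝ, 0 < Y →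
    (Summable fun n : ℕ ↦ pr n * ker k m (n / Y)) ∧
      ∑' n : ℕ, pr n * ker k m (n / Y) ≤ D * Y := by
  obtain ⟨D, hD, h⟩ := exists_sum_lp_wker_le m hk
  refine ⟨2 * D, by positivity, fun Y hY ↦ ?_⟩
  obtain ⟨hs, hle⟩ := h Y hY
  have hterm : ∀ n : ℕ, pr n * ker k m (n / Y) ≤ 2 * (lp n * wker k m (n / Y)) := fun n ↦ by
    rw [← mul_assoc]
    exact mul_le_mul (pr_le n) (ker_le_wker k m (by positivity)) (ker_nonneg k m (by positivity))
      (by linarith [lp_nonneg n])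
  have hs' : Summable fun n : ℕ ↦ pr n * ker k m (n / Y) :=
    Summable.of_nonneg_of_le (fun n ↦ mul_nonneg (pr_nonneg n) (ker_nonneg k m (by positivity)))
      hterm (hs.mul_left 2)
  refine ⟨hs', (hs'.tsum_le_tsum hterm (hs.mul_left 2)).trans ?_⟩
  rw [tsum_mul_left]
  linarith

/-- Used with `l = log p` and `L = log Y` to replace the weight `log p` by `log Y`; the cases
`L ≤ 2 l` and `2 l ≤ L` are `p ≥ √Y` and `p ≤ √Y`. -/
lemma abs_log_sub_mul_le {l L : ℝ} (hl : 1 / 2 ≤ l) :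
    |l - L| * L ≤ 4 * l * (1 + |l - L|) ^ 2 := by
  set x := |l - L| with hx
  have hx0 : 0 ≤ x := abs_nonneg _
  rcases le_total L (2 * l) with h | h
  · have : x * L ≤ x * (2 * l) := by gcongr
    nlinarith [mul_nonneg hx0 (by linarith : 0 ≤ l), mul_nonneg (sq_nonneg x) (by linarith : 0 ≤ l)]
  · have h1 : L ≤ 2 * x := by
      have := neg_le_abs (l - L)
      linarith
    have : x * L ≤ x * (2 * x) := by gcongr
    nlinarith [mul_nonneg hx0 (by linarith : 0 ≤ l), sq_nonneg x]

/-- The smoothly weighted prime count is `Γ(m+1/k)/k · Y/log Y + O(Y/log² Y)`. -/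
lemma exists_sum_pr_ker_sub_le {k : ℕ} (m : ℕ) (hk : 1 ≤ k) : ∃ C : ℝ, 0 < C ∧ ∀ Y : ℝ,
    Real.exp 1 ≤ Y →
    |∑' n : ℕ, pr n * ker k m (n / Y) - Real.Gamma (m + 1 / k) / k * (Y / Real.log Y)| ≤
      C * (Y / Real.log Y ^ 2) := by
  obtain ⟨C, hC, h⟩ := exists_sum_lp_ker_sub_le m hk
  obtain ⟨D, hD, hw⟩ := exists_sum_lp_wker_le m hk
  obtain ⟨E, hE, hp⟩ := exists_sum_pr_ker_le m hk
  refine ⟨C + 4 * D, by positivity, fun Y hY ↦ ?_⟩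
  have hY0 : 0 < Y := (Real.exp_pos 1).trans_le hY
  have hlog : 0 < Real.log Y := by
    have : 1 ≤ Real.log Y := by rwa [Real.le_log_iff_exp_le hY0]
    linarith
  set L := Real.log Y with hL
  have hs1 := summable_lp_ker m hk hY0
  have hsp := (hp Y hY0).1
  have hsw := (hw Y hY0).1
  have hterm : ∀ n : ℕ, |pr n * ker k m (n / Y) - 1 / L * (lp n * ker k m (n / Y))| ≤
      4 / L ^ 2 * (lp n * wker k m (n / Y)) := fun n ↦ by
    by_cases hn : n.Prime
    · have hn0 : (0 : ℝ) < n := by exact_mod_cast hn.pos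
      have hl : 1 / 2 ≤ Real.log n := by
        have := pr_le n
        simp only [pr, lp, hn, if_true] at this
        linarith
      have key := abs_log_sub_mul_le (L := L) hl
      simp only [pr, lp, hn, if_true, wker]
      rw [Real.log_div hn0.ne' hY0.ne', ← hL]
      have hk0 := ker_nonneg k m (u := n / Y) (by positivity)
      have e : 1 * ker k m (n / Y) - 1 / L * (Real.log n * ker k m (n / Y)) =
          -((Real.log n - L) / L * ker k m (n / Y)) := by
        field_simp
        ring
      rw [e, abs_neg, abs_mul, abs_div, abs_of_pos hlog, abs_of_nonneg hk0]
      have e2 : 4 / L ^ 2 * (Real.log n * (ker k m (n / Y) * (1 + |Real.log n - L|) ^ 2)) =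
          (4 * Real.log n * (1 + |Real.log n - L|) ^ 2 / L ^ 2) * ker k m (n / Y) := by ring
      rw [e2]
      refine mul_le_mul_of_nonneg_right ?_ hk0
      rw [div_le_div_iff₀ hlog (by positivity)]
      nlinarith
    · simp [pr, lp, hn]
  have hdiff : |∑' n : ℕ, pr n * ker k m (n / Y) - 1 / L * ∑' n : ℕ, lp n * ker k m (n / Y)| ≤
      4 / L ^ 2 * (D * Y) := by
    rw [← tsum_mul_left, ← hsp.tsum_sub (hs1.mul_left _)]
    rw [← Real.norm_eq_abs]
    refine (tsum_of_norm_bounded (hsw.mul_left (4 / L ^ 2)).hasSum fun n ↦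
      (Real.norm_eq_abs _).le.trans (hterm n)).trans ?_
    rw [tsum_mul_left]
    gcongr
    exact (hw Y hY0).2
  have hmain : |1 / L * ∑' n : ℕ, lp n * ker k m (n / Y) -
      Real.Gamma (m + 1 / k) / k * (Y / L)| ≤ C * (Y / L ^ 2) := by
    have e : 1 / L * ∑' n : ℕ, lp n * ker k m (n / Y) - Real.Gamma (m + 1 / k) / k * (Y / L) =
      1 / L * (∑' n : ℕ, lp n * ker k m (n / Y) - Y * (Real.Gamma (m + 1 / k) / k)) := by ring
    rw [e, abs_mul, abs_of_pos (by positivity)]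
    calc _ ≤ 1 / L * (C * (Y / L)) := by
          gcongr
          exact h Y hY
      _ = _ := by ring
  refine (abs_sub_le _ (1 / L * ∑' n : ℕ, lp n * ker k m (n / Y)) _).trans ?_
  calc _ ≤ 4 / L ^ 2 * (D * Y) + C * (Y / L ^ 2) := add_le_add hdiff hmain
    _ = _ := by ring

/-! ### Summation over `j` -/

/-- The smoothly weighted prime count `∑_p ker(p/Y)`. -/
noncomputable def primeSum (k m : ℕ) (Y : ℝ) : ℝ := ∑' n : ℕ, pr n * ker k m (n / Y)

lemma primeSum_nonneg (k m : ℕ) {Y : ℝ} (hY : 0 < Y) : 0 ≤ primeSum k m Y :=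
  tsum_nonneg fun n ↦ mul_nonneg (pr_nonneg n) (ker_nonneg k m (by positivity))

/-- With `ρ = e^{-1/X}`, the inner sum over primes is a rescaled `primeSum` at `(X/j)^{1/k}`. -/
lemma inner_sum_eq {k : ℕ} (m : ℕ) (hk : 1 ≤ k) {X : ℝ} (hX : 0 < X) (j : ℕ+) :
    ∑' p : Nat.Primes, (j : ℝ) ^ ((m : ℤ) - 1) * ((p : ℕ) : ℝ) ^ (k * m) *
        Real.exp (-(1 / X)) ^ ((j : ℕ) * (p : ℕ) ^ k) =
      X ^ m * (1 / (j : ℝ) * primeSum k m ((X / j) ^ (1 / k : ℝ))) := by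
  have hj : (0 : ℝ) < j := by exact_mod_cast j.pos
  set Y := (X / j) ^ (1 / k : ℝ) with hY
  have hYk : Y ^ k = X / j := by
    rw [hY, ← Real.rpow_natCast, ← Real.rpow_mul (by positivity), one_div_mul_cancel (by positivity),
      Real.rpow_one]
  have hterm : ∀ n : ℕ, (j : ℝ) ^ ((m : ℤ) - 1) * (n : ℝ) ^ (k * m) *
      Real.exp (-(1 / X)) ^ ((j : ℕ) * n ^ k) = X ^ m * (1 / (j : ℝ)) * ker k m (n / Y) := fun n ↦ by
    unfold ker
    rw [div_pow, div_pow, pow_mul Y, hYk, ← Real.exp_nat_mul, zpow_sub_one₀ hj.ne', zpow_natCast]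
    have e : ((j : ℕ) * n ^ k : ℕ) * -(1 / X) = -((n : ℝ) ^ k / (X / j)) := by
      push_cast
      field_simp
    rw [e, div_pow X]
    field_simp
  have h1 : ∑' p : Nat.Primes, (j : ℝ) ^ ((m : ℤ) - 1) * ((p : ℕ) : ℝ) ^ (k * m) *
      Real.exp (-(1 / X)) ^ ((j : ℕ) * (p : ℕ) ^ k) =
      ∑' p : Nat.Primes, X ^ m * (1 / (j : ℝ)) * ker k m ((p : ℕ) / Y) :=
    tsum_congr fun p ↦ hterm p
  rw [h1, tsum_mul_left, mul_assoc, primeSum]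
  congr 2
  have h2 := tsum_subtype {n : ℕ | n.Prime} fun n : ℕ ↦ ker k m (n / Y)
  refine h2.trans (tsum_congr fun n ↦ ?_)
  by_cases hn : n.Prime <;> simp [pr, hn]

lemma summable_pnat_rpow {s : ℝ} (hs : 1 < s) : Summable fun j : ℕ+ ↦ (j : ℝ) ^ (-s) :=
  (Real.summable_nat_rpow.mpr (by linarith : -s < -1)).comp_injective PNat.coe_injective

lemma summable_pnat_log {s : ℝ} (hs : 1 < s) :
    Summable fun j : ℕ+ ↦ (j : ℝ) ^ (-s) * (1 + Real.log j) ^ 2 := by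
  set ε := (s - 1) / 4 with hε
  have hε0 : 0 < ε := by rw [hε]; linarith
  refine Summable.of_nonneg_of_le (fun j ↦ by positivity) (fun j ↦ ?_)
    ((summable_pnat_rpow (s := s - 2 * ε) (by rw [hε]; linarith)).mul_left ((1 + 1 / ε) ^ 2))
  have hj1 : (1 : ℝ) ≤ j := Nat.one_le_cast.mpr j.pos
  have hj : (0 : ℝ) < j := by linarith
  have h1 : 1 + Real.log j ≤ (1 + 1 / ε) * (j : ℝ) ^ ε := by
    have e1 := Real.log_le_rpow_div hj.le hε0
    have e2 : 1 ≤ (j : ℝ) ^ ε := Real.one_le_rpow hj1 hε0.le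
    calc _ ≤ (j : ℝ) ^ ε + (j : ℝ) ^ ε / ε := add_le_add e2 e1
      _ = _ := by ring
  have h0 : 0 ≤ Real.log j := Real.log_nonneg hj1
  calc (j : ℝ) ^ (-s) * (1 + Real.log j) ^ 2
      ≤ (j : ℝ) ^ (-s) * ((1 + 1 / ε) * (j : ℝ) ^ ε) ^ 2 := by gcongr
    _ = (1 + 1 / ε) ^ 2 * (j : ℝ) ^ (-(s - 2 * ε)) := by
        rw [show -(s - 2 * ε) = -s + ε + ε by ring, Real.rpow_add hj, Real.rpow_add hj]
        ring

lemma zetaR_eq {s : ℝ} (hs : 1 < s) : zetaR s = ∑' j : ℕ+, (j : ℝ) ^ (-s) := by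
  have h1 : riemannZeta (s : ℂ) = ((∑' n : ℕ, (n : ℝ) ^ (-s) : ℝ) : ℂ) := by
    rw [zeta_eq_tsum_one_div_nat_cpow (by simpa using hs), ofReal_tsum]
    refine tsum_congr fun n ↦ ?_
    rw [Real.rpow_neg n.cast_nonneg, ofReal_inv, ofReal_cpow n.cast_nonneg, ofReal_natCast, one_div]
  rw [zetaR, h1, ofReal_re]
  refine (PNat.coe_injective.tsum_eq (f := fun n : ℕ ↦ (n : ℝ) ^ (-s)) fun n hn ↦ ?_).symm
  refine ⟨⟨n, Nat.pos_of_ne_zero ?_⟩, rfl⟩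
  rintro rfl
  exact hn (by simpa using Real.zero_rpow (by linarith : -s ≠ 0))

/-- Asymptotics of the `j`-th summand, uniformly in `j`: the range `j ≤ √X` uses the prime number
theorem, the range `j > √X` only a Chebyshev bound. -/
lemma exists_summand_sub_le {k : ℕ} (m : ℕ) (hk : 1 ≤ k) : ∃ C : ℝ, 0 < C ∧ ∀ X : ℝ, 0 < X →
    2 * k ≤ Real.log X → ∀ j : ℕ+,
    |1 / (j : ℝ) * primeSum k m ((X / j) ^ (1 / k : ℝ)) -
      Real.Gamma (m + 1 / k) * X ^ (1 / k : ℝ) / Real.log X * (j : ℝ) ^ (-(1 + 1 / k : ℝ))| ≤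
    C * X ^ (1 / k : ℝ) / Real.log X ^ 2 *
      ((j : ℝ) ^ (-(1 + 1 / k : ℝ)) * (1 + Real.log j) ^ 2) := by
  obtain ⟨C, hC, hS⟩ := exists_sum_pr_ker_sub_le m hk
  obtain ⟨D, hD, hP⟩ := exists_sum_pr_ker_le m hk
  have hk0 : (0 : ℝ) < k := by exact_mod_cast hk
  set G := Real.Gamma (m + 1 / k) with hG
  have hG0 : 0 < G := Real.Gamma_pos_of_pos (by positivity)
  refine ⟨4 * k ^ 2 * C + 4 * D + 2 * G, by positivity, fun X hX hL j ↦ ?_⟩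
  have hj1 : (1 : ℝ) ≤ j := Nat.one_le_cast.mpr j.pos
  have hj : (0 : ℝ) < j := by linarith
  set Y := (X / j) ^ (1 / k : ℝ) with hY
  have hY0 : 0 < Y := by positivity
  have hlogY : Real.log Y = (Real.log X - Real.log j) / k := by
    rw [hY, Real.log_rpow (by positivity), Real.log_div hX.ne' hj.ne']; ring
  set L := Real.log X with hLdef
  set l := Real.log j with hl
  have hl0 : 0 ≤ l := Real.log_nonneg hj1
  have hL0 : 0 < L := by linarith
  set A := Y / j with hA
  have hA0 : 0 < A := by positivity
  have hAeq : X ^ (1 / k : ℝ) * (j : ℝ) ^ (-(1 + 1 / k : ℝ)) = A := by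
    rw [hA, hY, Real.div_rpow hX.le hj.le, neg_add, Real.rpow_add hj, Real.rpow_neg_one,
      Real.rpow_neg hj.le]
    field_simp
  have e1 : G * X ^ (1 / k : ℝ) / L * (j : ℝ) ^ (-(1 + 1 / k : ℝ)) = G * A / L := by
    rw [← hAeq]; ring
  have e2 : ∀ c : ℝ, c * X ^ (1 / k : ℝ) / L ^ 2 *
      ((j : ℝ) ^ (-(1 + 1 / k : ℝ)) * (1 + l) ^ 2) = c * (A / L ^ 2 * (1 + l) ^ 2) := fun c ↦ by
    rw [← hAeq]; ring
  rw [e1, e2]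
  have hq0 : 0 < A / L ^ 2 := by positivity
  rcases le_total l (L / 2) with h | h
  · have hLl : L / 2 ≤ L - l := by linarith
    have hLl0 : 0 < L - l := by linarith
    have hlog1 : 1 ≤ Real.log Y := by
      rw [hlogY, le_div_iff₀ hk0]; linarith
    have key := hS Y ((Real.le_log_iff_exp_le hY0).mp hlog1)
    rw [hlogY] at key
    change |primeSum k m Y - _| ≤ _ at key
    have f1 : |1 / (j : ℝ) * primeSum k m Y - G * A / (L - l)| ≤
        4 * k ^ 2 * C * (A / L ^ 2) := by
      have : 1 / (j : ℝ) * primeSum k m Y - G * A / (L - l) =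
          1 / j * (primeSum k m Y - G / k * (Y / ((L - l) / k))) := by
        rw [hA]; field_simp
      rw [this, abs_mul, abs_of_pos (by positivity)]
      calc _ ≤ 1 / (j : ℝ) * (C * (Y / ((L - l) / k) ^ 2)) := by gcongr
        _ ≤ 1 / (j : ℝ) * (C * (Y / ((L / 2) / k) ^ 2)) := by gcongr
        _ = _ := by rw [hA]; field_simp; norm_num
    have f2 : |G * A / (L - l) - G * A / L| ≤ 2 * G * (A / L ^ 2) * l := by
      have : G * A / (L - l) - G * A / L = G * A * l / L * (1 / (L - l)) := by
        field_simp; ring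
      rw [this, abs_of_nonneg (by positivity)]
      calc _ ≤ G * A * l / L * (1 / (L / 2)) := by gcongr
        _ = _ := by field_simp
    refine (abs_sub_le _ _ _).trans ((add_le_add f1 f2).trans ?_)
    have g1 : 1 ≤ (1 + l) ^ 2 := one_le_pow₀ (by linarith)
    have g2 : l ≤ (1 + l) ^ 2 := by nlinarith
    have t1 : 4 * k ^ 2 * C * (A / L ^ 2) ≤ 4 * k ^ 2 * C * (A / L ^ 2) * (1 + l) ^ 2 :=
      le_mul_of_one_le_right (by positivity) g1
    have t2 : 2 * G * (A / L ^ 2) * l ≤ 2 * G * (A / L ^ 2) * (1 + l) ^ 2 := by gcongr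
    have t3 : 0 ≤ 4 * D * (A / L ^ 2) * (1 + l) ^ 2 := by positivity
    linarith
  · have f1 : 1 / (j : ℝ) * primeSum k m Y ≤ D * A := by
      calc _ ≤ 1 / (j : ℝ) * (D * Y) := by gcongr; exact (hP Y hY0).2
        _ = _ := by rw [hA]; ring
    have f0 : 0 ≤ 1 / (j : ℝ) * primeSum k m Y := mul_nonneg (by positivity) (primeSum_nonneg k m hY0)
    have f2 : D * A ≤ 4 * D * (A / L ^ 2) * (1 + l) ^ 2 := by
      have : L ^ 2 ≤ 4 * (1 + l) ^ 2 := by nlinarith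
      calc D * A = D * (A / L ^ 2) * L ^ 2 := by field_simp
        _ ≤ D * (A / L ^ 2) * (4 * (1 + l) ^ 2) := by gcongr
        _ = _ := by ring
    have f3 : G * A / L ≤ 2 * G * (A / L ^ 2) * (1 + l) ^ 2 := by
      have : L ≤ 2 * (1 + l) ^ 2 := by nlinarith
      calc G * A / L = G * (A / L ^ 2) * L := by field_simp
        _ ≤ G * (A / L ^ 2) * (2 * (1 + l) ^ 2) := by gcongr
        _ = _ := by ring
    have f4 : 0 ≤ G * A / L := by positivity
    have t3 : 0 ≤ 4 * k ^ 2 * C * (A / L ^ 2) * (1 + l) ^ 2 := by positivity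
    rw [abs_le]
    constructor <;> linarith

/-- The asymptotic formula with additive error, in terms of `X = 1/log(1/ρ)`. -/
lemma exists_Phim_sub_le {k : ℕ} (m : ℕ) (hk : 1 ≤ k) : ∃ C : ℝ, 0 < C ∧ ∀ X : ℝ, 0 < X →
    2 * k ≤ Real.log X →
    |Phim k m (Real.exp (-(1 / X))) - zetaR (1 + 1 / k) * Real.Gamma (m + 1 / k) *
      X ^ (m + 1 / k : ℝ) / Real.log X| ≤ C * (X ^ (m + 1 / k : ℝ) / Real.log X ^ 2) := by
  obtain ⟨C, hC, h⟩ := exists_summand_sub_le m hk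
  have hk0 : (0 : ℝ) < k := by exact_mod_cast hk
  have hs1 : (1 : ℝ) < 1 + 1 / k := by simp; omega
  have hsum := summable_pnat_rpow hs1
  have hsumlog := summable_pnat_log hs1
  set W := ∑' j : ℕ+, (j : ℝ) ^ (-(1 + 1 / k : ℝ)) * (1 + Real.log j) ^ 2 with hW
  have hW0 : 0 ≤ W := tsum_nonneg fun j ↦ by positivity
  refine ⟨C * W + 1, by positivity, fun X hX hL ↦ ?_⟩
  have hL0 : 0 < Real.log X := by linarith
  set a : ℕ+ → ℝ := fun j ↦ 1 / (j : ℝ) * primeSum k m ((X / j) ^ (1 / k : ℝ)) with ha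
  set b : ℕ+ → ℝ := fun j ↦ Real.Gamma (m + 1 / k) * X ^ (1 / k : ℝ) / Real.log X *
    (j : ℝ) ^ (-(1 + 1 / k : ℝ)) with hb
  have hbs : Summable b := hsum.mul_left _
  have hcs := hsumlog.mul_left (C * X ^ (1 / k : ℝ) / Real.log X ^ 2)
  have hle : ∀ j, ‖a j - b j‖ ≤ C * X ^ (1 / k : ℝ) / Real.log X ^ 2 *
      ((j : ℝ) ^ (-(1 + 1 / k : ℝ)) * (1 + Real.log j) ^ 2) := fun j ↦ h X hX hL j
  have hds : Summable fun j ↦ a j - b j := Summable.of_norm_bounded hcs hle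
  have has : Summable a := by simpa using hds.add hbs
  have hPhi : Phim k m (Real.exp (-(1 / X))) = X ^ m * ∑' j, a j := by
    rw [Phim, ← tsum_mul_left]
    exact tsum_congr fun j ↦ inner_sum_eq m hk hX j
  have hXp : X ^ (m + 1 / k : ℝ) = X ^ m * X ^ (1 / k : ℝ) := by
    rw [Real.rpow_add hX, Real.rpow_natCast]
  have hmain : zetaR (1 + 1 / k) * Real.Gamma (m + 1 / k) * X ^ (m + 1 / k : ℝ) / Real.log X =
      X ^ m * ∑' j, b j := by
    rw [hb, tsum_mul_left, zetaR_eq hs1, hXp]; ring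
  have hdiff : ‖∑' j, (a j - b j)‖ ≤ C * X ^ (1 / k : ℝ) / Real.log X ^ 2 * W := by
    rw [hW, ← tsum_mul_left]
    exact tsum_of_norm_bounded hcs.hasSum hle
  rw [hPhi, hmain, ← mul_sub, ← has.tsum_sub hbs, abs_mul, abs_of_pos (by positivity)]
  calc _ ≤ X ^ m * (C * X ^ (1 / k : ℝ) / Real.log X ^ 2 * W) := by gcongr; exact hdiff
    _ = C * W * (X ^ (m + 1 / k : ℝ) / Real.log X ^ 2) := by rw [hXp]; ring
    _ ≤ _ := by gcongr; linarith

end PhiAsymp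

/-- Lemma 3.1, equation (3.1): with `X = 1/log(1/ρ)`,
`Φ_{(m)}(ρ) = ζ(1+1/k) Γ(m+1/k) X^{m+1/k} / log X · (1 + O(1/log X))` as `ρ → 1⁻`. -/
theorem stmt7 (k m : ℕ) (hk : 1 ≤ k) :
    ∃ C : ℝ, 0 < C ∧
      ∀ᶠ ρ in nhdsWithin (1 : ℝ) (Set.Ioo 0 1),
        |Phim k m ρ -
            zetaR (1 + 1 / (k : ℝ)) * Real.Gamma ((m : ℝ) + 1 / k) *
              (1 / Real.log (1 / ρ)) ^ ((m : ℝ) + 1 / k) /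
              Real.log (1 / Real.log (1 / ρ))| ≤
          C *
            (zetaR (1 + 1 / (k : ℝ)) * Real.Gamma ((m : ℝ) + 1 / k) *
                (1 / Real.log (1 / ρ)) ^ ((m : ℝ) + 1 / k) /
                Real.log (1 / Real.log (1 / ρ))) *
            (1 / Real.log (1 / Real.log (1 / ρ))) := by
  obtain ⟨C, hC, h⟩ := PhiAsymp.exists_Phim_sub_le m hk
  have hk0 : (0 : ℝ) < k := by exact_mod_cast hk
  have hs1 : (1 : ℝ) < 1 + 1 / k := by simp; omega
  have hG : 0 < Real.Gamma ((m : ℝ) + 1 / k) := Real.Gamma_pos_of_pos (by positivity)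
  have hZ : 0 < zetaR (1 + 1 / (k : ℝ)) := by
    rw [PhiAsymp.zetaR_eq hs1]
    exact (PhiAsymp.summable_pnat_rpow hs1).tsum_pos (fun j ↦ by positivity) 1 (by simp)
  refine ⟨C / (zetaR (1 + 1 / (k : ℝ)) * Real.Gamma ((m : ℝ) + 1 / k)), by positivity, ?_⟩
  -- `ρ > exp(-exp(-2 * k))` is the condition `log X > 2 * k`
  have hlt : Real.exp (-Real.exp (-(2 * k))) < 1 := by
    rw [Real.exp_lt_one_iff]; linarith [Real.exp_pos (-(2 * k : ℝ))]
  filter_upwards [self_mem_nhdsWithin, mem_nhdsWithin_of_mem_nhds (Ioi_mem_nhds hlt)] with ρ hρ hρ'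
  have hρ0 : 0 < ρ := hρ.1
  have hlog0 : 0 < Real.log (1 / ρ) := Real.log_pos (by rw [one_lt_div hρ0]; exact hρ.2)
  set X := 1 / Real.log (1 / ρ) with hX
  have hX0 : 0 < X := by positivity
  have hXinv : -(1 / X) = Real.log ρ := by rw [hX, one_div_one_div, one_div, Real.log_inv, neg_neg]
  have hρX : Real.exp (-(1 / X)) = ρ := by rw [hXinv, Real.exp_log hρ0]
  have hL : 2 * k ≤ Real.log X := by
    have h1 : -Real.exp (-(2 * k : ℝ)) < Real.log ρ := (Real.lt_log_iff_exp_lt hρ0).mpr hρ'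
    have h2 : Real.log (1 / ρ) ≤ Real.exp (-(2 * k : ℝ)) := by
      rw [one_div, Real.log_inv]; linarith
    have h3 := Real.log_le_log hlog0 h2
    rw [Real.log_exp] at h3
    rw [hX, one_div, Real.log_inv]
    linarith
  have hL0 : 0 < Real.log X := by linarith
  have key := h X hX0 hL
  rw [hρX] at key
  refine key.trans (le_of_eq ?_)
  generalize zetaR (1 + 1 / (k : ℝ)) = z at hZ ⊢
  generalize Real.Gamma ((m : ℝ) + 1 / k) = g at hG ⊢
  field_simp
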